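/- arXiv:1712.07371 — 3 statements merged into one kernel-verified Lean document; each statement's English description precedes it below -/
import Mathlib

section
/- Let f : ℝ → ℝ be a 2π-periodic, even, measurable function with 0 < m ≤ f(λ) ≤ M for all λ, and let f_n : ℝ → ℝ (n ∈ ℕ) be 2π-periodic, even, measurable functions with C₁ ≤ f_n(λ) ≤ C₂ for all λ and n, where 0 < C₁ < C₂ < ∞, such that sup_{λ∈[−π,π]} |f_n(λ) − f(λ)| → 0 as n → ∞. Let a_k := a_k(log f) and â_{k,n} := a_k(log f_n) (these are real since f and f_n are even), and let (c_k) and (ĉ_{k,n}) be obtained from (a_k)_{k≥1} and (â_{k,n})_{k≥1} by the MA recursion. Then Σ_{k=0}^∞ (ĉ_{k,n} − c_k)² → 0 as n → ∞. -/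
open MeasureTheory Filter Topology

/-- For an even 2π-periodic integrable `g : ℝ → ℝ` its `k`-th Fourier coefficient is real
and equals the cosine coefficient `a_k(g) = (1/(2π)) ∫_{-π}^{π} g(λ) cos(kλ) dλ`. -/
noncomputable def cosFourierCoef (g : ℝ → ℝ) (k : ℕ) : ℝ :=
  (1 / (2 * Real.pi)) * ∫ x in (-Real.pi)..Real.pi, g x * Real.cos (k * x)

/-- The (real) MA recursion: `c 0 = 1` and
`c (k+1) = ∑_{j=0}^{k} (1 - j/(k+1)) * a (k+1-j) * c j`. -/
def IsMARecR (a c : ℕ → ℝ) : Prop :=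
  c 0 = 1 ∧
    ∀ k : ℕ, c (k + 1) =
      ∑ j ∈ Finset.range (k + 1), (1 - (j : ℝ) / ((k : ℝ) + 1)) * a (k + 1 - j) * c j

/-!
The MA recursion for `a` says that `(cₖ)` are the Taylor coefficients at `0` of the outer function
`C = exp (∑_{k ≥ 1} aₖ zᵏ)`. Let `C` and `D` come from the cosine coefficients of `u = log f` and
`v = log fₙ`, and let `E = D / C`. Bessel's inequality on circles of radius `r < 1` bounds
`∑ (dₖ - cₖ)²` by the supremum of the circle averages of `|D - C|² = |C|² |E - 1|²`. Since
`E 0 = 1`, the average of `|E - 1|²` is that of `|E|²` minus `1`, so it is enough to bound `|C|²`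
above and `|E|²` by a number close to `1`. Both `log |C|²` and `log |E|²` are differences between a
Poisson integral at `z` and at `0`, so positivity of the Poisson kernel turns `α ≤ u ≤ β` into
`|C|² ≤ exp (β - α)` and `|v - u| ≤ δ` into `|E|² ≤ exp (2δ)`.
-/

section CircleAverage

open Complex Metric Real

theorem circleAverage_norm_sub_circleAverage_sq {F : Type*} [NormedAddCommGroup F]
    [InnerProductSpace ℝ F] [CompleteSpace F] {f : ℂ → F} {c : ℂ} {R : ℝ}
    (hf : CircleIntegrable f c R) (hf2 : CircleIntegrable (fun z => ‖f z‖ ^ 2) c R) :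
    circleAverage (fun z => ‖f z - circleAverage f c R‖ ^ 2) c R =
      circleAverage (fun z => ‖f z‖ ^ 2) c R - ‖circleAverage f c R‖ ^ 2 := by
  set m := circleAverage f c R
  have hinner : CircleIntegrable (fun z => inner ℝ m (f z)) c R :=
    ⟨(innerSL ℝ m).integrable_comp hf.1, (innerSL ℝ m).integrable_comp hf.2⟩
  have havg : circleAverage (fun z => inner ℝ m (f z)) c R = ‖m‖ ^ 2 := by
    rw [← real_inner_self_eq_norm_sq]
    exact (innerSL ℝ m).circleAverage_comp_comm hf
  have hexpand : (fun z => ‖f z - m‖ ^ 2) =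
      fun z => ‖f z‖ ^ 2 - ((2 : ℝ) • inner ℝ m (f z) - ‖m‖ ^ 2) := by
    ext z
    rw [norm_sub_sq_real, real_inner_comm, smul_eq_mul]
    ring
  have hconst : CircleIntegrable (fun _ => ‖m‖ ^ 2) c R := circleIntegrable_const _ _ _
  have hinner2 : CircleIntegrable (fun z => (2 : ℝ) • inner ℝ m (f z)) c R := hinner.const_fun_smul
  calc circleAverage (fun z => ‖f z - m‖ ^ 2) c R
      = circleAverage (fun z => ‖f z‖ ^ 2) c R -
          ((2 : ℝ) • circleAverage (fun z => inner ℝ m (f z)) c R - ‖m‖ ^ 2) := by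
        rw [hexpand, circleAverage_fun_sub hf2 (hinner2.fun_sub hconst),
          circleAverage_fun_sub hinner2 hconst, circleAverage_fun_smul, circleAverage_const]
    _ = circleAverage (fun z => ‖f z‖ ^ 2) c R - ‖m‖ ^ 2 := by
        rw [havg, smul_eq_mul]
        ring

theorem circleAverage_norm_mul_sub_one_sq_le {f g : ℂ → ℂ} {c : ℂ} {R K L : ℝ}
    (hf : ContinuousOn f (sphere c |R|)) (hg : DiffContOnCl ℂ g (ball c |R|)) (hgc : g c = 1)
    (hK : ∀ z ∈ sphere c |R|, ‖f z‖ ^ 2 ≤ K) (hL : ∀ z ∈ sphere c |R|, ‖g z‖ ^ 2 ≤ L) :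
    circleAverage (fun z => ‖f z * (g z - 1)‖ ^ 2) c R ≤ K * (L - 1) := by
  have hgs : ContinuousOn g (sphere c |R|) := hg.continuousOn_ball.mono sphere_subset_closedBall
  have hK0 : 0 ≤ K := by
    obtain ⟨z, hz⟩ := NormedSpace.sphere_nonempty (x := c).2 (abs_nonneg R)
    exact (sq_nonneg _).trans (hK z hz)
  have hint : CircleIntegrable (fun z => ‖g z‖ ^ 2) c R :=
    (hgs.norm.pow 2).circleIntegrable'
  have hvar := circleAverage_norm_sub_circleAverage_sq hgs.circleIntegrable' hint
  rw [hg.circleAverage, hgc, norm_one, one_pow] at hvar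
  calc circleAverage (fun z => ‖f z * (g z - 1)‖ ^ 2) c R
      ≤ circleAverage (fun z => K • ‖g z - 1‖ ^ 2) c R := by
        refine circleAverage_mono
          ((hf.mul (hgs.sub continuousOn_const)).norm.pow 2).circleIntegrable'
          (((hgs.sub continuousOn_const).norm.pow 2).const_smul K).circleIntegrable'
          fun z hz => ?_
        rw [norm_mul, mul_pow, smul_eq_mul]
        gcongr
        exact hK z hz
    _ = K * (circleAverage (fun z => ‖g z‖ ^ 2) c R - 1) := by
        rw [circleAverage_fun_smul, hvar, smul_eq_mul]
    _ ≤ K * (L - 1) := by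
        gcongr
        exact circleAverage_mono_on_of_le_circle hint hL

theorem circleAverage_inv_pow_smul_eq_iteratedDeriv {F : Type*} [NormedAddCommGroup F]
    [NormedSpace ℂ F] [CompleteSpace F] {f : ℂ → F} {c : ℂ} {R : ℝ} (hR : 0 < R)
    (hf : DiffContOnCl ℂ f (ball c R)) (k : ℕ) :
    circleAverage (fun z => ((z - c) ^ k)⁻¹ • f z) c R =
      (k.factorial : ℂ)⁻¹ • iteratedDeriv k f c := by
  have hcauchy := hf.circleIntegral_one_div_sub_center_pow_smul hR k
  have hpow : (fun z => (z - c)⁻¹ • ((z - c) ^ k)⁻¹ • f z) =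
      fun z => (1 / (z - c) ^ (k + 1)) • f z := by
    ext z
    rw [smul_smul, ← mul_inv, ← pow_succ', one_div]
  rw [circleAverage_eq_circleIntegral hR.ne', hpow, hcauchy, smul_smul, div_eq_mul_inv,
    inv_mul_cancel_left₀ two_pi_I_ne_zero]

theorem fourierCoeffOn_comp_circleMap {F : Type*} [NormedAddCommGroup F] [NormedSpace ℂ F]
    (f : ℂ → F) (c : ℂ) {R : ℝ} (hR : R ≠ 0) (k : ℕ) :
    fourierCoeffOn two_pi_pos (fun θ => f (circleMap c R θ)) k =
      (R : ℂ) ^ k • circleAverage (fun z => ((z - c) ^ k)⁻¹ • f z) c R := by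
  have hR' : (R : ℂ) ≠ 0 := mod_cast hR
  have hchar (θ : ℝ) : fourier (-(k : ℤ)) (θ : AddCircle (2 * π - 0)) =
      (R : ℂ) ^ k * ((circleMap c R θ - c) ^ k)⁻¹ := by
    rw [fourier_coe_apply, circleMap_sub_center, circleMap_zero, mul_pow, mul_inv,
      mul_inv_cancel_left₀ (pow_ne_zero k hR'), ← Complex.exp_nat_mul,
      ← Complex.exp_neg]
    congr 1
    push_cast
    field_simp
    ring
  rw [fourierCoeffOn_eq_integral, circleAverage]
  simp only [hchar, mul_smul, intervalIntegral.integral_smul, sub_zero, one_div]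
  rw [smul_comm]

theorem sum_norm_taylorCoeff_mul_pow_sq_le {f : ℂ → ℂ} {c : ℂ} {R : ℝ} (hR : 0 < R)
    (hf : DiffContOnCl ℂ f (ball c R)) (s : Finset ℕ) :
    ∑ k ∈ s, ‖iteratedDeriv k f c / k.factorial * R ^ k‖ ^ 2 ≤
      circleAverage (fun z => ‖f z‖ ^ 2) c R := by
  have hcont : Continuous fun θ => f (circleMap c R θ) :=
    hf.continuousOn_ball.comp_continuous (continuous_circleMap c R)
      fun θ => circleMap_mem_closedBall c hR.le θ
  have hL2 : MemLp (fun θ => f (circleMap c R θ)) 2 (volume.restrict (Set.Ioc 0 (2 * π))) := by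
    obtain ⟨B, hB⟩ := (isCompact_closedBall c R).exists_bound_of_continuousOn hf.continuousOn_ball
    exact MemLp.of_bound hcont.aestronglyMeasurable B
      (ae_of_all _ fun θ => hB _ (circleMap_mem_closedBall c hR.le θ))
  have hcoeff (k : ℕ) : fourierCoeffOn two_pi_pos (fun θ => f (circleMap c R θ)) k =
      iteratedDeriv k f c / k.factorial * R ^ k := by
    rw [fourierCoeffOn_comp_circleMap f c hR.ne', circleAverage_inv_pow_smul_eq_iteratedDeriv hR hf,
      smul_eq_mul, smul_eq_mul]
    ring
  have hparseval := hasSum_sq_fourierCoeffOn two_pi_pos hL2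
  rw [sub_zero] at hparseval
  simp only [← hcoeff]
  calc ∑ k ∈ s, ‖fourierCoeffOn two_pi_pos (fun θ => f (circleMap c R θ)) k‖ ^ 2
      = ∑ i ∈ s.map Nat.castEmbedding,
          ‖fourierCoeffOn two_pi_pos (fun θ => f (circleMap c R θ)) i‖ ^ 2 := by
        rw [Finset.sum_map]; rfl
    _ ≤ circleAverage (fun z => ‖f z‖ ^ 2) c R :=
        sum_le_hasSum _ (fun _ _ => sq_nonneg _) hparseval

theorem tsum_norm_taylorCoeff_mul_pow_sq_le {f : ℂ → ℂ} {c : ℂ} {R K : ℝ} (hR : 0 < R)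
    (hf : DifferentiableOn ℂ f (ball c R))
    (hK : ∀ r ∈ Set.Ioo 0 R, circleAverage (fun z => ‖f z‖ ^ 2) c r ≤ K) :
    ∑' k : ℕ, ENNReal.ofReal (‖iteratedDeriv k f c / k.factorial * R ^ k‖ ^ 2) ≤
      ENNReal.ofReal K := by
  refine ENNReal.tsum_le_of_sum_range_le fun N => ?_
  rw [← ENNReal.ofReal_sum_of_nonneg fun _ _ => sq_nonneg _]
  refine ENNReal.ofReal_le_ofReal ?_
  have hcont : Continuous fun r : ℝ =>
      ∑ k ∈ Finset.range N, ‖iteratedDeriv k f c / k.factorial * (r : ℂ) ^ k‖ ^ 2 := by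
    fun_prop
  refine le_of_tendsto (x := 𝓝[<] R) ((hcont.tendsto R).mono_left nhdsWithin_le_nhds) ?_
  filter_upwards [Ioo_mem_nhdsLT hR] with r hr
  have hclosure : closure (ball c r) ⊆ ball c R :=
    closure_ball_subset_closedBall.trans (closedBall_subset_ball hr.2)
  exact (sum_norm_taylorCoeff_mul_pow_sq_le hr.1 (hf.mono hclosure).diffContOnCl _).trans (hK r hr)

end CircleAverage

section MATransfer

open Complex Metric Finset

theorem iteratedDeriv_succ_cexp_comp {A : ℂ → ℂ} {z : ℂ} (hA : AnalyticAt ℂ A z) (k : ℕ) :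
    iteratedDeriv (k + 1) (fun w => cexp (A w)) z =
      ∑ j ∈ range (k + 1), (k.choose j : ℂ) * iteratedDeriv j (fun w => cexp (A w)) z *
        iteratedDeriv (k - j + 1) A z := by
  have hexp : AnalyticAt ℂ (fun w => cexp (A w)) z := hA.cexp
  have hderiv : deriv (fun w => cexp (A w)) =ᶠ[𝓝 z] (fun w => cexp (A w)) * deriv A := by
    filter_upwards [hA.eventually_analyticAt] with w hw
    exact hw.differentiableAt.hasDerivAt.cexp.deriv
  rw [iteratedDeriv_succ', hderiv.iteratedDeriv_eq,
    iteratedDeriv_mul hexp.contDiffAt hA.deriv.contDiffAt]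
  simp only [iteratedDeriv_succ']

theorem taylorCoeff_succ_cexp_comp {A : ℂ → ℂ} {z : ℂ} (hA : AnalyticAt ℂ A z) (k : ℕ) :
    iteratedDeriv (k + 1) (fun w => cexp (A w)) z / (k + 1).factorial =
      ∑ j ∈ range (k + 1), (1 - (j : ℂ) / (k + 1)) *
        (iteratedDeriv (k + 1 - j) A z / (k + 1 - j).factorial) *
        (iteratedDeriv j (fun w => cexp (A w)) z / j.factorial) := by
  rw [iteratedDeriv_succ_cexp_comp hA, sum_div]
  refine sum_congr rfl fun j hj => ?_
  obtain ⟨l, rfl⟩ := Nat.exists_eq_add_of_le (mem_range_succ_iff.1 hj)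
  have hchoose : ((j + l).choose j : ℂ) * j.factorial * l.factorial = (j + l).factorial := by
    exact_mod_cast Nat.choose_symm_add (a := j) (b := l) ▸
      Nat.add_choose_mul_factorial_mul_factorial j l
  have hchoose_ne : ((j + l).choose j : ℂ) ≠ 0 :=
    mod_cast (Nat.choose_pos (Nat.le_add_right j l)).ne'
  have hjl : (j : ℂ) + l + 1 ≠ 0 := mod_cast (j + l).succ_ne_zero
  rw [show j + l - j = l by lia, show j + l + 1 - j = l + 1 by lia, Nat.factorial_succ l,
    Nat.factorial_succ (j + l)]
  push_cast
  rw [← hchoose]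
  field_simp
  ring

/-- The generating function `∑ aₖ zᵏ` of a real sequence, as a function on the complex plane; it is
meaningful where the series converges, in particular on the unit disc if `a` is bounded. -/
noncomputable def generatingFunction (a : ℕ → ℝ) (z : ℂ) : ℂ :=
  ∑' k, (a k : ℂ) * z ^ k

/-- The transfer function `exp (∑_{k ≥ 1} aₖ zᵏ)`, whose Taylor coefficients at `0` are the
solution of the MA recursion for `a`. -/
noncomputable def maTransfer (a : ℕ → ℝ) (z : ℂ) : ℂ :=
  cexp (generatingFunction a z - a 0)

variable {a : ℕ → ℝ} {B : ℝ}

theorem hasFPowerSeriesOnBall_generatingFunction (ha : ∀ k, |a k| ≤ B) :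
    HasFPowerSeriesOnBall (generatingFunction a)
      (FormalMultilinearSeries.ofScalars ℂ fun k => (a k : ℂ)) 0 1 := by
  set p := FormalMultilinearSeries.ofScalars ℂ fun k => (a k : ℂ)
  have hsum : p.sum = generatingFunction a := by
    exact FormalMultilinearSeries.ofScalarsSum_eq_tsum (E := ℂ) fun k => (a k : ℂ)
  have hradius : 1 ≤ p.radius := by
    refine mod_cast p.le_radius_of_bound (r := 1) B fun n => ?_
    simpa [p, FormalMultilinearSeries.ofScalars_norm] using ha n
  exact hsum ▸ (p.hasFPowerSeriesOnBall (one_pos.trans_le hradius)).mono one_pos hradius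

theorem differentiableOn_generatingFunction (ha : ∀ k, |a k| ≤ B) :
    DifferentiableOn ℂ (generatingFunction a) (ball 0 1) := by
  have h := (hasFPowerSeriesOnBall_generatingFunction ha).differentiableOn
  rwa [← ENNReal.ofReal_one, eball_ofReal] at h

theorem taylorCoeff_generatingFunction (ha : ∀ k, |a k| ≤ B) (k : ℕ) :
    iteratedDeriv k (generatingFunction a) 0 / k.factorial = a k := by
  have h := hasFPowerSeriesOnBall_generatingFunction ha
  have hp := h.analyticAt.hasFPowerSeriesAt.eq_formalMultilinearSeries h.hasFPowerSeriesAt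
  simpa only [FormalMultilinearSeries.coeff_ofScalars] using
    congrArg (FormalMultilinearSeries.coeff · k) hp

theorem maTransfer_zero (a : ℕ → ℝ) : maTransfer a 0 = 1 := by
  have h : generatingFunction a 0 = a 0 := by
    rw [generatingFunction, tsum_eq_single 0 fun k hk => by rw [zero_pow hk, mul_zero],
      pow_zero, mul_one]
  rw [maTransfer, h, sub_self, Complex.exp_zero]

theorem differentiableOn_maTransfer (ha : ∀ k, |a k| ≤ B) :
    DifferentiableOn ℂ (maTransfer a) (ball 0 1) :=
  ((differentiableOn_generatingFunction ha).sub_const _).cexp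

theorem IsMARecR.taylorCoeff_maTransfer {c : ℕ → ℝ} (h : IsMARecR a c) (ha : ∀ k, |a k| ≤ B)
    (k : ℕ) : iteratedDeriv k (maTransfer a) 0 / k.factorial = c k := by
  have hA : AnalyticAt ℂ (fun z => generatingFunction a z - a 0) 0 :=
    (hasFPowerSeriesOnBall_generatingFunction ha).analyticAt.sub analyticAt_const
  have hcoeff {l : ℕ} (hl : l ≠ 0) :
      iteratedDeriv l (fun z => generatingFunction a z - a 0) 0 / l.factorial = a l := by
    obtain ⟨l, rfl⟩ := Nat.exists_eq_add_one_of_ne_zero hl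
    rw [iteratedDeriv_succ', deriv_sub_const_fun, ← iteratedDeriv_succ',
      taylorCoeff_generatingFunction ha]
  induction k using Nat.strong_induction_on with
  | _ k ih =>
    cases k with
    | zero => simp [maTransfer_zero, h.1]
    | succ k =>
      refine (taylorCoeff_succ_cexp_comp hA k).trans ?_
      rw [h.2]
      push_cast
      refine sum_congr rfl fun j hj => ?_
      rw [hcoeff (Nat.sub_ne_zero_of_lt (mem_range.1 hj))]
      exact congrArg _ (ih j (mem_range.1 hj))

end MATransfer

section EvenPoissonIntegral

open Complex Metric Real

theorem hasSum_re_div_pow {z ζ : ℂ} (hz : ‖z‖ < ‖ζ‖) :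
    HasSum (fun k : ℕ => ((z / ζ) ^ k).re) ((poissonKernel 0 z ζ + 1) / 2) := by
  have hζ : ζ ≠ 0 := norm_pos_iff.1 ((norm_nonneg z).trans_lt hz)
  have hsub : ζ - z ≠ 0 := sub_ne_zero.2 fun h => hz.ne' (congrArg norm h)
  have hlt : ‖z / ζ‖ < 1 := by rwa [norm_div, div_lt_one ((norm_nonneg z).trans_lt hz)]
  have hval : (1 - z / ζ)⁻¹ = ((herglotzRieszKernel 0 z ζ + 1) / (2 : ℝ) : ℂ) := by
    rw [herglotzRieszKernel_def, one_sub_div hζ, inv_div, sub_zero, sub_zero, div_add_one hsub]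
    push_cast
    ring
  have h := Complex.hasSum_re (hasSum_geometric_of_norm_lt_one hlt)
  rw [hval, div_ofReal_re, add_re, one_re] at h
  rwa [poissonKernel_eq_re_herglotzRieszKernel]

/-- The Poisson kernel of the unit disc at `z`, symmetrized over the boundary points `exp (± i x)`.
It represents harmonic functions with even boundary values. -/
noncomputable def evenPoissonKernel (z : ℂ) (x : ℝ) : ℝ :=
  (poissonKernel 0 z (circleMap 0 1 x) + poissonKernel 0 z (circleMap 0 1 (-x))) / 2

/-- The value at `z` of the Poisson integral of the even function on `[-π, π]` which has the same
cosine coefficients as `g`. -/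
noncomputable def evenPoissonIntegral (g : ℝ → ℝ) (z : ℂ) : ℝ :=
  (1 / (2 * π)) * ∫ x in -π..π, g x * evenPoissonKernel z x

theorem hasSum_cos_mul_re_pow {z : ℂ} (hz : ‖z‖ < 1) (x : ℝ) :
    HasSum (fun k : ℕ => Real.cos (k * x) * (z ^ k).re) ((evenPoissonKernel z x + 1) / 2) := by
  have hnorm (y : ℝ) : ‖z‖ < ‖circleMap 0 1 y‖ := by simpa using hz
  have hpow (y : ℝ) (k : ℕ) : ((z / circleMap 0 1 y) ^ k).re =
      (z ^ k).re * Real.cos (k * y) + (z ^ k).im * Real.sin (k * y) := by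
    have hexp : (z / circleMap 0 1 y) ^ k = z ^ k * cexp ((-(k * y) : ℝ) * I) := by
      rw [circleMap_zero, ofReal_one, one_mul, div_pow, ← Complex.exp_nat_mul, div_eq_mul_inv,
        ← Complex.exp_neg]
      push_cast
      ring_nf
    rw [hexp, mul_re, exp_ofReal_mul_I_re, exp_ofReal_mul_I_im, Real.cos_neg, Real.sin_neg]
    ring
  have hterm (k : ℕ) : Real.cos (k * x) * (z ^ k).re =
      (((z / circleMap 0 1 x) ^ k).re + ((z / circleMap 0 1 (-x)) ^ k).re) / 2 := by
    rw [hpow, hpow, mul_neg, Real.cos_neg, Real.sin_neg]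
    ring
  have hsum : (evenPoissonKernel z x + 1) / 2 = ((poissonKernel 0 z (circleMap 0 1 x) + 1) / 2 +
      (poissonKernel 0 z (circleMap 0 1 (-x)) + 1) / 2) / 2 := by
    rw [evenPoissonKernel]
    ring
  simp only [hterm, hsum]
  exact ((hasSum_re_div_pow (hnorm x)).add (hasSum_re_div_pow (hnorm (-x)))).div_const 2

theorem evenPoissonKernel_nonneg {z : ℂ} (hz : ‖z‖ ≤ 1) (x : ℝ) : 0 ≤ evenPoissonKernel z x := by
  have hpos (y : ℝ) : 0 ≤ poissonKernel 0 z (circleMap 0 1 y) := by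
    rw [poissonKernel_def]
    refine div_nonneg ?_ (sq_nonneg _)
    simpa using hz
  exact div_nonneg (add_nonneg (hpos x) (hpos (-x))) zero_le_two

theorem continuous_evenPoissonKernel {z : ℂ} (hz : ‖z‖ < 1) : Continuous (evenPoissonKernel z) := by
  have hne (y : ℝ) : ‖circleMap 0 1 y - 0 - (z - 0)‖ ^ 2 ≠ 0 := by
    refine pow_ne_zero 2 (norm_ne_zero_iff.2 (sub_ne_zero.2 fun h => hz.ne ?_))
    simpa using (congrArg norm h).symm
  have hcont : Continuous fun y => poissonKernel 0 z (circleMap 0 1 y) := by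
    simp only [poissonKernel_def]
    exact Continuous.div (by fun_prop) (by fun_prop) hne
  exact (hcont.add (hcont.comp continuous_neg)).div_const 2

variable {g u v : ℝ → ℝ} {z : ℂ}

theorem hasSum_cosFourierCoef_mul_re_pow (hg : IntervalIntegrable g volume (-π) π) (hz : ‖z‖ < 1) :
    HasSum (fun k => cosFourierCoef g k * (z ^ k).re)
      ((evenPoissonIntegral g z + cosFourierCoef g 0) / 2) := by
  have hsum : HasSum (fun k : ℕ => ∫ x in -π..π, g x * (Real.cos (k * x) * (z ^ k).re))
      (∫ x in -π..π, g x * ((evenPoissonKernel z x + 1) / 2)) := by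
    refine intervalIntegral.hasSum_integral_of_dominated_convergence
      (fun k x => |g x| * ‖z‖ ^ k) (fun k => ?_) (fun k => ae_of_all _ fun x _ => ?_)
      (ae_of_all _ fun x _ => (summable_geometric_of_lt_one (norm_nonneg z) hz).mul_left _) ?_
      (ae_of_all _ fun x _ => (hasSum_cos_mul_re_pow hz x).mul_left _)
    · exact hg.aestronglyMeasurable_restrict_uIoc.mul (by fun_prop)
    · rw [norm_mul, norm_mul, Real.norm_eq_abs, ← norm_pow]
      gcongr
      exact (mul_le_of_le_one_left (norm_nonneg _) (Real.abs_cos_le_one _)).trans (abs_re_le_norm _)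
    · simp only [tsum_mul_left]
      exact hg.abs.mul_const _
  have hterm (k : ℕ) : cosFourierCoef g k * (z ^ k).re =
      (1 / (2 * π)) * ∫ x in -π..π, g x * (Real.cos (k * x) * (z ^ k).re) := by
    simp only [cosFourierCoef, ← mul_assoc, intervalIntegral.integral_mul_const]
  have hval : (evenPoissonIntegral g z + cosFourierCoef g 0) / 2 =
      (1 / (2 * π)) * ∫ x in -π..π, g x * ((evenPoissonKernel z x + 1) / 2) := by
    have hsplit (x : ℝ) : g x * ((evenPoissonKernel z x + 1) / 2) =
        (g x * evenPoissonKernel z x + g x) / 2 := by ring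
    have hgP := hg.mul_continuousOn (continuous_evenPoissonKernel hz).continuousOn
    simp only [hsplit, intervalIntegral.integral_div, intervalIntegral.integral_add hgP hg,
      evenPoissonIntegral, cosFourierCoef, Nat.cast_zero, zero_mul, Real.cos_zero, mul_one]
    ring
  simp only [hterm, hval]
  exact hsum.mul_left _

theorem evenPoissonIntegral_zero (g : ℝ → ℝ) : evenPoissonIntegral g 0 = cosFourierCoef g 0 := by
  simp [evenPoissonIntegral, cosFourierCoef, evenPoissonKernel, poissonKernel_def]

theorem cosFourierCoef_const (b : ℝ) (k : ℕ) :
    cosFourierCoef (fun _ => b) k = if k = 0 then b else 0 := by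
  split_ifs with hk
  · rw [hk, cosFourierCoef]
    simp
    field_simp
    ring
  · have hk' : (k : ℝ) ≠ 0 := mod_cast hk
    simp [cosFourierCoef, intervalIntegral.integral_comp_mul_left Real.cos hk', Real.sin_nat_mul_pi]

theorem evenPoissonIntegral_const (b : ℝ) (hz : ‖z‖ < 1) :
    evenPoissonIntegral (fun _ => b) z = b := by
  have h := hasSum_cosFourierCoef_mul_re_pow (intervalIntegrable_const (c := b)) hz
  have hsingle := h.unique (hasSum_single 0 fun k hk => by
    rw [cosFourierCoef_const, if_neg hk, zero_mul])
  rw [cosFourierCoef_const, if_pos rfl, pow_zero, one_re, mul_one] at hsingle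
  linarith

theorem evenPoissonIntegral_le_add_const {δ : ℝ} (hu : IntervalIntegrable u volume (-π) π)
    (hv : IntervalIntegrable v volume (-π) π) (h : ∀ x ∈ Set.Icc (-π) π, v x ≤ u x + δ)
    (hz : ‖z‖ < 1) : evenPoissonIntegral v z ≤ evenPoissonIntegral u z + δ := by
  have hP : ContinuousOn (evenPoissonKernel z) (Set.uIcc (-π) π) :=
    (continuous_evenPoissonKernel hz).continuousOn
  have hδ : IntervalIntegrable (fun _ => δ) volume (-π) π := intervalIntegrable_const
  have hδP := hδ.mul_continuousOn hP
  have hmono : ∫ x in -π..π, v x * evenPoissonKernel z x ≤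
      ∫ x in -π..π, (u x * evenPoissonKernel z x + δ * evenPoissonKernel z x) := by
    refine intervalIntegral.integral_mono_on (neg_le_self pi_nonneg) (hv.mul_continuousOn hP)
      ((hu.mul_continuousOn hP).add hδP) fun x hx => ?_
    rw [← add_mul]
    exact mul_le_mul_of_nonneg_right (h x hx) (evenPoissonKernel_nonneg hz.le x)
  calc evenPoissonIntegral v z
      ≤ (1 / (2 * π)) *
          ∫ x in -π..π, (u x * evenPoissonKernel z x + δ * evenPoissonKernel z x) :=
        mul_le_mul_of_nonneg_left hmono (by positivity)
    _ = evenPoissonIntegral u z + evenPoissonIntegral (fun _ => δ) z := by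
        rw [intervalIntegral.integral_add (hu.mul_continuousOn hP) hδP, mul_add]
        rfl
    _ = evenPoissonIntegral u z + δ := by rw [evenPoissonIntegral_const δ hz]

theorem abs_cosFourierCoef_le (hg : IntervalIntegrable g volume (-π) π) (k : ℕ) :
    |cosFourierCoef g k| ≤ (1 / (2 * π)) * ∫ x in -π..π, |g x| := by
  rw [cosFourierCoef, abs_mul, abs_of_nonneg (by positivity : 0 ≤ 1 / (2 * π))]
  gcongr
  refine (intervalIntegral.abs_integral_le_integral_abs (neg_le_self pi_nonneg)).trans
    (intervalIntegral.integral_mono_on (neg_le_self pi_nonneg)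
      (hg.mul_continuousOn (by fun_prop)).abs hg.abs fun x _ => ?_)
  rw [abs_mul]
  exact mul_le_of_le_one_right (abs_nonneg _) (Real.abs_cos_le_one _)

end EvenPoissonIntegral

section Stability

open Complex Metric Real

variable {u v : ℝ → ℝ} {c d : ℕ → ℝ} {z : ℂ} {α β δ : ℝ}

theorem norm_maTransfer_cosFourierCoef_sq {g : ℝ → ℝ} (hg : IntervalIntegrable g volume (-π) π)
    (hz : ‖z‖ < 1) :
    ‖maTransfer (cosFourierCoef g) z‖ ^ 2 =
      Real.exp (evenPoissonIntegral g z - cosFourierCoef g 0) := by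
  have hsummable : Summable fun k => (cosFourierCoef g k : ℂ) * z ^ k := by
    refine .of_norm_bounded ((summable_geometric_of_lt_one (norm_nonneg z) hz).mul_left
      ((1 / (2 * π)) * ∫ x in -π..π, |g x|)) fun k => ?_
    rw [norm_mul, norm_real, norm_pow]
    gcongr
    exact abs_cosFourierCoef_le hg k
  have hre : (generatingFunction (cosFourierCoef g) z).re =
      (evenPoissonIntegral g z + cosFourierCoef g 0) / 2 := by
    have h := hasSum_re hsummable.hasSum
    simp only [re_ofReal_mul] at h
    exact h.unique (hasSum_cosFourierCoef_mul_re_pow hg hz)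
  rw [maTransfer, norm_exp, ← Real.exp_nat_mul, sub_re, hre, ofReal_re]
  push_cast
  ring_nf

theorem norm_maTransfer_cosFourierCoef_sq_le (hu : IntervalIntegrable u volume (-π) π)
    (hα : ∀ x ∈ Set.Icc (-π) π, α ≤ u x) (hβ : ∀ x ∈ Set.Icc (-π) π, u x ≤ β) (hz : ‖z‖ < 1) :
    ‖maTransfer (cosFourierCoef u) z‖ ^ 2 ≤ Real.exp (β - α) := by
  have hz0 : ‖(0 : ℂ)‖ < 1 := by simp
  have hupper : evenPoissonIntegral u z ≤ evenPoissonIntegral (fun _ => β) z + 0 :=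
    evenPoissonIntegral_le_add_const intervalIntegrable_const hu (by simpa using hβ) hz
  have hlower : evenPoissonIntegral (fun _ => α) 0 ≤ evenPoissonIntegral u 0 + 0 :=
    evenPoissonIntegral_le_add_const hu intervalIntegrable_const (by simpa using hα) hz0
  rw [evenPoissonIntegral_const β hz, add_zero] at hupper
  rw [evenPoissonIntegral_const α hz0, evenPoissonIntegral_zero, add_zero] at hlower
  rw [norm_maTransfer_cosFourierCoef_sq hu hz, Real.exp_le_exp]
  linarith

theorem norm_maTransfer_div_sq_le (hu : IntervalIntegrable u volume (-π) π)
    (hv : IntervalIntegrable v volume (-π) π) (h : ∀ x ∈ Set.Icc (-π) π, |v x - u x| ≤ δ)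
    (hz : ‖z‖ < 1) :
    ‖maTransfer (cosFourierCoef v) z / maTransfer (cosFourierCoef u) z‖ ^ 2 ≤
      Real.exp (2 * δ) := by
  have hz0 : ‖(0 : ℂ)‖ < 1 := by simp
  have hvu : evenPoissonIntegral v z ≤ evenPoissonIntegral u z + δ :=
    evenPoissonIntegral_le_add_const hu hv (fun x hx => by grind [abs_le.1 (h x hx)]) hz
  have huv : cosFourierCoef u 0 ≤ cosFourierCoef v 0 + δ := by
    rw [← evenPoissonIntegral_zero, ← evenPoissonIntegral_zero]
    exact evenPoissonIntegral_le_add_const hv hu (fun x hx => by grind [abs_le.1 (h x hx)]) hz0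
  rw [norm_div, div_pow, norm_maTransfer_cosFourierCoef_sq hv hz,
    norm_maTransfer_cosFourierCoef_sq hu hz, ← Real.exp_sub, Real.exp_le_exp]
  linarith

theorem circleAverage_norm_maTransfer_sub_sq_le {r : ℝ} (hu : IntervalIntegrable u volume (-π) π)
    (hv : IntervalIntegrable v volume (-π) π) (hα : ∀ x ∈ Set.Icc (-π) π, α ≤ u x)
    (hβ : ∀ x ∈ Set.Icc (-π) π, u x ≤ β) (h : ∀ x ∈ Set.Icc (-π) π, |v x - u x| ≤ δ)
    (hr : |r| < 1) :
    circleAverage (fun z => ‖maTransfer (cosFourierCoef v) z - maTransfer (cosFourierCoef u) z‖ ^ 2)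
      0 r ≤ Real.exp (β - α) * (Real.exp (2 * δ) - 1) := by
  set C := maTransfer (cosFourierCoef u) with hCdef
  set D := maTransfer (cosFourierCoef v) with hDdef
  have hC : DifferentiableOn ℂ C (ball 0 1) :=
    differentiableOn_maTransfer (abs_cosFourierCoef_le hu)
  have hD : DifferentiableOn ℂ D (ball 0 1) :=
    differentiableOn_maTransfer (abs_cosFourierCoef_le hv)
  have hC0 (z : ℂ) : C z ≠ 0 := Complex.exp_ne_zero _
  have hball : closedBall (0 : ℂ) |r| ⊆ ball 0 1 := closedBall_subset_ball hr
  have hsphere {z : ℂ} (hz : z ∈ sphere 0 |r|) : ‖z‖ < 1 :=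
    mem_ball_zero_iff.1 (hball (sphere_subset_closedBall hz))
  have hDC : DiffContOnCl ℂ (fun z => D z / C z) (ball 0 |r|) :=
    ((hD.fun_div hC fun z _ => hC0 z).mono
      (closure_ball_subset_closedBall.trans hball)).diffContOnCl
  have hDC0 : D 0 / C 0 = 1 := by rw [hCdef, hDdef, maTransfer_zero, maTransfer_zero, div_one]
  have hfactor (z : ℂ) : D z - C z = C z * (D z / C z - 1) := by
    rw [mul_sub, mul_div_cancel₀ _ (hC0 z), mul_one]
  simp only [hfactor]
  exact circleAverage_norm_mul_sub_one_sq_le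
    (hC.continuousOn.mono (sphere_subset_closedBall.trans hball)) hDC hDC0
    (fun z hz => norm_maTransfer_cosFourierCoef_sq_le hu hα hβ (hsphere hz))
    (fun z hz => norm_maTransfer_div_sq_le hu hv h (hsphere hz))

theorem tsum_sq_sub_le_of_isMARecR (hu : IntervalIntegrable u volume (-π) π)
    (hv : IntervalIntegrable v volume (-π) π) (hα : ∀ x ∈ Set.Icc (-π) π, α ≤ u x)
    (hβ : ∀ x ∈ Set.Icc (-π) π, u x ≤ β) (h : ∀ x ∈ Set.Icc (-π) π, |v x - u x| ≤ δ)
    (hc : IsMARecR (cosFourierCoef u) c) (hd : IsMARecR (cosFourierCoef v) d) :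
    ∑' k, ENNReal.ofReal ((d k - c k) ^ 2) ≤
      ENNReal.ofReal (Real.exp (β - α) * (Real.exp (2 * δ) - 1)) := by
  have hC := differentiableOn_maTransfer (abs_cosFourierCoef_le hu)
  have hD := differentiableOn_maTransfer (abs_cosFourierCoef_le hv)
  have hcoeff (k : ℕ) : ‖iteratedDeriv k
      (maTransfer (cosFourierCoef v) - maTransfer (cosFourierCoef u)) 0 /
        k.factorial * ((1 : ℝ) : ℂ) ^ k‖ ^ 2 = (d k - c k) ^ 2 := by
    have h0 : ball (0 : ℂ) 1 ∈ 𝓝 0 := ball_mem_nhds _ one_pos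
    rw [iteratedDeriv_sub (hD.analyticAt h0).contDiffAt (hC.analyticAt h0).contDiffAt, sub_div,
      hd.taylorCoeff_maTransfer (abs_cosFourierCoef_le hv),
      hc.taylorCoeff_maTransfer (abs_cosFourierCoef_le hu), ofReal_one, one_pow, mul_one,
      ← ofReal_sub, norm_real, Real.norm_eq_abs, sq_abs]
  simp only [← hcoeff]
  refine tsum_norm_taylorCoeff_mul_pow_sq_le one_pos (hD.sub hC) fun r hr => ?_
  exact circleAverage_norm_maTransfer_sub_sq_le hu hv hα hβ h (by rw [abs_of_pos hr.1]; exact hr.2)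

theorem tendsto_tsum_sq_sub_of_tendstoUniformlyOn {ι : Type*} {l : Filter ι} {w : ι → ℝ → ℝ}
    {e : ι → ℕ → ℝ} (hu : IntervalIntegrable u volume (-π) π)
    (hw : ∀ n, AEStronglyMeasurable (w n) (volume.restrict (Set.uIoc (-π) π)))
    (hα : ∀ x ∈ Set.Icc (-π) π, α ≤ u x) (hβ : ∀ x ∈ Set.Icc (-π) π, u x ≤ β)
    (hunif : TendstoUniformlyOn w u l (Set.Icc (-π) π))
    (hc : IsMARecR (cosFourierCoef u) c) (he : ∀ n, IsMARecR (cosFourierCoef (w n)) (e n)) :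
    Tendsto (fun n => ∑' k, ENNReal.ofReal ((e n k - c k) ^ 2)) l (𝓝 0) := by
  have hbound : Tendsto (fun δ => ENNReal.ofReal (Real.exp (β - α) * (Real.exp (2 * δ) - 1)))
      (𝓝[>] 0) (𝓝 0) := by
    refine tendsto_nhdsWithin_of_tendsto_nhds (Continuous.tendsto' ?_ _ _ (by simp))
    exact ENNReal.continuous_ofReal.comp (by fun_prop)
  refine ENNReal.tendsto_nhds_zero.2 fun ε hε => ?_
  obtain ⟨δ, hδε, hδ⟩ :=
    ((ENNReal.tendsto_nhds_zero.1 hbound ε hε).and self_mem_nhdsWithin).exists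
  filter_upwards [Metric.tendstoUniformlyOn_iff.1 hunif δ hδ] with n hn
  have hclose : ∀ x ∈ Set.Icc (-π) π, |w n x - u x| ≤ δ := fun x hx => by
    rw [abs_sub_comm]
    exact (hn x hx).le
  have hwn : IntervalIntegrable (w n) volume (-π) π := by
    refine (hu.abs.add (intervalIntegrable_const (c := δ))).mono_fun' (hw n) ?_
    filter_upwards [ae_restrict_mem measurableSet_uIoc] with x hx
    rw [Set.uIoc_of_le (neg_le_self pi_nonneg)] at hx
    exact sub_le_iff_le_add'.1 ((abs_sub_abs_le_abs_sub _ _).trans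
      (hclose x (Set.Ioc_subset_Icc_self hx)))
  exact (tsum_sq_sub_le_of_isMARecR hu hwn hα hβ hclose hc (he n)).trans hδε

end Stability

section Log

open scoped NNReal

theorem lipschitzOnWith_log_Ici {b : ℝ≥0} (hb : 0 < b) :
    LipschitzOnWith b⁻¹ Real.log (Set.Ici (b : ℝ)) := by
  refine (convex_Ici _).lipschitzOnWith_of_nnnorm_deriv_le (fun x hx => ?_) fun x hx => ?_
  · exact Real.differentiableAt_log ((NNReal.coe_pos.2 hb).trans_le hx).ne'
  · rw [Real.deriv_log, nnnorm_inv]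
    exact inv_anti₀ hb (NNReal.coe_le_coe.1 (hx.trans (le_abs_self x)))

theorem tendstoUniformlyOn_log {ι X : Type*} {l : Filter ι} {s : Set X} {F : ι → X → ℝ} {f : X → ℝ}
    {m : ℝ} (hm : 0 < m) (hf : ∀ x ∈ s, m ≤ f x) (hF : TendstoUniformlyOn F f l s) :
    TendstoUniformlyOn (fun n x => Real.log (F n x)) (fun x => Real.log (f x)) l s := by
  have hlog : UniformContinuousOn Real.log (Set.Ici (m / 2)) :=
    (lipschitzOnWith_log_Ici (b := ⟨m / 2, (half_pos hm).le⟩) (half_pos hm)).uniformContinuousOn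
  refine hlog.comp_tendstoUniformlyOn_eventually ?_
    (fun x hx => (half_le_self hm.le).trans (hf x hx)) hF
  filter_upwards [Metric.tendstoUniformlyOn_iff.1 hF (m / 2) (half_pos hm)] with n hn x hx
  have hdist : |f x - F n x| < m / 2 := hn x hx
  exact Set.mem_Ici.2 (by linarith [hf x hx, (abs_lt.1 hdist).2])

end Log

theorem statement5_general {ι : Type*} {l : Filter ι} {f : ℝ → ℝ} {fn : ι → ℝ → ℝ} {m M : ℝ}
    {c : ℕ → ℝ} {chat : ι → ℕ → ℝ} (hm : 0 < m)
    (hlower : ∀ x ∈ Set.Icc (-Real.pi) Real.pi, m ≤ f x)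
    (hupper : ∀ x ∈ Set.Icc (-Real.pi) Real.pi, f x ≤ M)
    (hf : AEMeasurable f (volume.restrict (Set.uIoc (-Real.pi) Real.pi)))
    (hfn : ∀ n, AEMeasurable (fn n) (volume.restrict (Set.uIoc (-Real.pi) Real.pi)))
    (hunif : TendstoUniformlyOn fn f l (Set.Icc (-Real.pi) Real.pi))
    (hc : IsMARecR (cosFourierCoef fun x => Real.log (f x)) c)
    (hchat : ∀ n, IsMARecR (cosFourierCoef fun x => Real.log (fn n x)) (chat n)) :
    Tendsto (fun n => ∑' k, ENNReal.ofReal ((chat n k - c k) ^ 2)) l (𝓝 0) := by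
  have hlog_lower : ∀ x ∈ Set.Icc (-Real.pi) Real.pi, Real.log m ≤ Real.log (f x) :=
    fun x hx => Real.log_le_log hm (hlower x hx)
  have hlog_upper : ∀ x ∈ Set.Icc (-Real.pi) Real.pi, Real.log (f x) ≤ Real.log M :=
    fun x hx => Real.log_le_log (hm.trans_le (hlower x hx)) (hupper x hx)
  have hint : IntervalIntegrable (fun x => Real.log (f x)) volume (-Real.pi) Real.pi := by
    refine (intervalIntegrable_const (c := max |Real.log m| |Real.log M|)).mono_fun'
      (Real.measurable_log.comp_aemeasurable hf).aestronglyMeasurable ?_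
    filter_upwards [ae_restrict_mem measurableSet_uIoc] with x hx
    rw [Set.uIoc_of_le (neg_le_self Real.pi_nonneg)] at hx
    have hx' := Set.Ioc_subset_Icc_self hx
    exact abs_le_max_abs_abs (hlog_lower x hx') (hlog_upper x hx')
  exact tendsto_tsum_sq_sub_of_tendstoUniformlyOn hint
    (fun n => (Real.measurable_log.comp_aemeasurable (hfn n)).aestronglyMeasurable)
    hlog_lower hlog_upper (tendstoUniformlyOn_log hm hlower hunif) hc hchat

/-- If `f` is 2π-periodic, even, measurable with `0 < m ≤ f ≤ M`, the `f_n` are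
2π-periodic, even, measurable with `0 < C₁ ≤ f_n ≤ C₂`, and `f_n → f` uniformly on
`[-π, π]`, and `(c_k)`, `(ĉ_{k,n})` are obtained by the MA recursion from the Fourier
coefficients of `log f` and `log f_n`, then `∑_{k=0}^∞ (ĉ_{k,n} - c_k)² → 0`. -/
theorem statement5 (f : ℝ → ℝ) (fn : ℕ → ℝ → ℝ) (m M C₁ C₂ : ℝ)
    (hm : 0 < m) (hbound : ∀ x, m ≤ f x ∧ f x ≤ M)
    (hC₁ : 0 < C₁) (hC₁₂ : C₁ < C₂)
    (hnbound : ∀ n x, C₁ ≤ fn n x ∧ fn n x ≤ C₂)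
    (hf_per : Function.Periodic f (2 * Real.pi))
    (hfn_per : ∀ n, Function.Periodic (fn n) (2 * Real.pi))
    (hf_even : ∀ x, f (-x) = f x) (hfn_even : ∀ n x, fn n (-x) = fn n x)
    (hf_meas : Measurable f) (hfn_meas : ∀ n, Measurable (fn n))
    (hunif : TendstoUniformlyOn fn f atTop (Set.Icc (-Real.pi) Real.pi))
    (c : ℕ → ℝ) (chat : ℕ → ℕ → ℝ)
    (hc : IsMARecR (fun k => cosFourierCoef (fun x => Real.log (f x)) k) c)
    (hchat : ∀ n, IsMARecR (fun k => cosFourierCoef (fun x => Real.log (fn n x)) k) (chat n)) :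
    Tendsto (fun n => ∑' k : ℕ, ENNReal.ofReal ((chat n k - c k) ^ 2)) atTop (𝓝 0) :=
  statement5_general hm (fun x _ => (hbound x).1) (fun x _ => (hbound x).2) hf_meas.aemeasurable
    (fun n => (hfn_meas n).aemeasurable) hunif hc hchat
end

section
/- Let a₀, â₀ ∈ ℝ and let (a_k)_{k≥1}, (â_k)_{k≥1} be real sequences with Σ_{k≥1} |a_k| < ∞ and Σ_{k≥1} |â_k| < ∞. Define f(λ) := exp(a₀ + 2 Σ_{k≥1} a_k cos(kλ)) and f̂(λ) := exp(â₀ + 2 Σ_{k≥1} â_k cos(kλ)), and set σ := (2π e^{a₀})^{1/2}, σ̂ := (2π e^{â₀})^{1/2}. Let (c_k) and (ĉ_k) be obtained from (a_k)_{k≥1} and (â_k)_{k≥1} by the MA recursion. Then Σ_{k=0}^∞ (σ c_k − σ̂ ĉ_k)² ≤ ∫₀^{2π} ( f(λ)^{1/2} − f̂(λ)^{1/2} )² dλ + ( sup_{λ∈[0,2π]} (f(λ) f̂(λ))^{1/2} ) · ∫₀^{2π} ( log f(λ) − log f̂(λ) )² dλ. -/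
open MeasureTheory Filter Topology

/-- The spectral density with cepstral coefficients `a₀` and `(a_k)_{k ≥ 1}`:
`f(λ) = exp (a₀ + 2 ∑_{k ≥ 1} a_k cos (kλ))`. -/
noncomputable def expSpec (a0 : ℝ) (a : ℕ → ℝ) (x : ℝ) : ℝ :=
  Real.exp (a0 + 2 * ∑' k : ℕ, a (k + 1) * Real.cos (((k : ℝ) + 1) * x))

/-- `σ = (2π e^{a₀})^{1/2}`. -/
noncomputable def sigmaOf (a0 : ℝ) : ℝ := Real.sqrt (2 * Real.pi * Real.exp a0)

/-!
Put `A(z) = a₀ / 2 + ∑_{k ≥ 1} a_k z^k`, so that `f(x) = |e^{A(e^{ix})}|²`. Comparing Taylor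
coefficients in `(e^A)' = A' e^A` gives the MA recursion, hence `σ c_k` is the `k`-th Taylor
coefficient of `√(2π) e^A`. Bessel's inequality on the unit circle therefore bounds
`∑ (σ c_k - σ̂ ĉ_k)²` by `∫ |e^A - e^Â|²`. Since `cos t ≥ 1 - t² / 2`, the integrand is at most
`(|e^A| - |e^Â|)² + |e^A| |e^Â| (Im (A - Â))²`. Finally `Im (A - Â)` vanishes at `0`, so the mean
value property of `(A - Â)²` shows that its mean square on the circle is at most that of
`Re (A - Â) = (log f - log f̂) / 2`.
-/

open Metric Real
open scoped Nat

section Taylor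

variable {𝕜 : Type*} [NontriviallyNormedField 𝕜]

/-- The `n`-th Taylor coefficient `f⁽ⁿ⁾(c) / n!` of `f` at `c`. -/
noncomputable def taylorCoeff (f : 𝕜 → 𝕜) (c : 𝕜) (n : ℕ) : 𝕜 :=
  iteratedDeriv n f c / n !

@[simp]
lemma taylorCoeff_zero (f : 𝕜 → 𝕜) (c : 𝕜) : taylorCoeff f c 0 = f c := by
  simp [taylorCoeff]

lemma taylorCoeff_sub {f g : 𝕜 → 𝕜} {c : 𝕜} {n : ℕ} (hf : ContDiffAt 𝕜 n f c)
    (hg : ContDiffAt 𝕜 n g c) :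
    taylorCoeff (f - g) c n = taylorCoeff f c n - taylorCoeff g c n := by
  simp only [taylorCoeff, iteratedDeriv_sub hf hg, sub_div]

lemma taylorCoeff_congr {f g : 𝕜 → 𝕜} {c : 𝕜} (h : f =ᶠ[𝓝 c] g) (n : ℕ) :
    taylorCoeff f c n = taylorCoeff g c n := by
  simp only [taylorCoeff, h.iteratedDeriv_eq n]

variable [CharZero 𝕜]

lemma taylorCoeff_mul {f g : 𝕜 → 𝕜} {c : 𝕜} {n : ℕ} (hf : ContDiffAt 𝕜 n f c)
    (hg : ContDiffAt 𝕜 n g c) :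
    taylorCoeff (f * g) c n =
      ∑ j ∈ Finset.range (n + 1), taylorCoeff f c j * taylorCoeff g c (n - j) := by
  simp only [taylorCoeff, iteratedDeriv_mul hf hg, Finset.sum_div]
  refine Finset.sum_congr rfl fun j hj => ?_
  rw [Nat.cast_choose 𝕜 (Finset.mem_range_succ_iff.1 hj)]
  have hn : (n ! : 𝕜) ≠ 0 := Nat.cast_ne_zero.2 n.factorial_ne_zero
  field_simp

lemma taylorCoeff_deriv (f : 𝕜 → 𝕜) (c : 𝕜) (n : ℕ) :
    taylorCoeff (deriv f) c n = (n + 1) * taylorCoeff f c (n + 1) := by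
  have hn : (n : 𝕜) + 1 ≠ 0 := Nat.cast_add_one_ne_zero n
  rw [taylorCoeff, taylorCoeff, iteratedDeriv_succ', Nat.factorial_succ]
  push_cast
  field_simp

end Taylor

lemma taylorCoeff_exp_comp_succ {A : ℂ → ℂ} {c : ℂ} (hA : AnalyticAt ℂ A c) (n : ℕ) :
    taylorCoeff (fun z => Complex.exp (A z)) c (n + 1) =
      ∑ j ∈ Finset.range (n + 1), (1 - j / (n + 1)) * taylorCoeff A c (n + 1 - j) *
        taylorCoeff (fun z => Complex.exp (A z)) c j := by
  have hn : (n : ℂ) + 1 ≠ 0 := Nat.cast_add_one_ne_zero n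
  have h_deriv : deriv (fun z => Complex.exp (A z)) =ᶠ[𝓝 c]
      (fun z => Complex.exp (A z)) * deriv A := by
    filter_upwards [hA.eventually_analyticAt] with z hz
    exact deriv_cexp hz.differentiableAt
  have h_exp : AnalyticAt ℂ (fun z => Complex.exp (A z)) c := hA.cexp
  apply mul_left_cancel₀ hn
  rw [← taylorCoeff_deriv, taylorCoeff_congr h_deriv,
    taylorCoeff_mul h_exp.contDiffAt hA.deriv.contDiffAt, Finset.mul_sum]
  refine Finset.sum_congr rfl fun j hj => ?_
  have hj : j ≤ n := Finset.mem_range_succ_iff.1 hj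
  rw [taylorCoeff_deriv, Nat.cast_sub hj, Nat.sub_add_comm hj]
  field_simp
  ring

lemma diffContOnCl_tsum_mul_pow {b : ℕ → ℂ} (hb : Summable fun k => ‖b k‖) :
    DiffContOnCl ℂ (fun z => ∑' k, b k * z ^ k) (ball 0 1) := by
  have h_le : ∀ k, ∀ z ∈ closedBall (0 : ℂ) 1, ‖b k * z ^ k‖ ≤ ‖b k‖ := fun k z hz => by
    rw [norm_mul, norm_pow]
    exact mul_le_of_le_one_right (norm_nonneg _)
      (pow_le_one₀ (norm_nonneg _) (mem_closedBall_zero_iff.1 hz))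
  exact .mk_ball
    (Complex.differentiableOn_tsum_of_summable_norm hb (fun k => by fun_prop) isOpen_ball
      fun k z hz => h_le k z (ball_subset_closedBall hz))
    (continuousOn_tsum (fun k => by fun_prop) hb h_le)

lemma taylorCoeff_tsum_mul_pow {b : ℕ → ℂ} (hb : Summable fun k => ‖b k‖) (n : ℕ) :
    taylorCoeff (fun z => ∑' k, b k * z ^ k) 0 n = b n := by
  set p := FormalMultilinearSeries.ofScalars ℂ b
  have h_radius : 0 < p.radius :=
    one_pos.trans_le <| p.le_radius_of_summable_norm (r := 1) <| by
      simpa [p, FormalMultilinearSeries.ofScalars_norm] using hb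
  have h_sum : p.sum = fun z => ∑' k, b k * z ^ k :=
    FormalMultilinearSeries.ofScalarsSum_eq_tsum (E := ℂ) b
  have hp := (p.hasFPowerSeriesOnBall h_radius).hasFPowerSeriesAt
  rw [h_sum] at hp
  exact congrFun (FormalMultilinearSeries.ofScalars_series_injective ℂ ℂ
    (hp.analyticAt.hasFPowerSeriesAt.eq_formalMultilinearSeries hp)) n

lemma norm_exp_sub_exp_sq_le (u v : ℂ) :
    ‖Complex.exp u - Complex.exp v‖ ^ 2 ≤
      (rexp u.re - rexp v.re) ^ 2 + rexp u.re * rexp v.re * (u.im - v.im) ^ 2 := by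
  have h_polar : ‖Complex.exp u - Complex.exp v‖ ^ 2 =
      (rexp u.re - rexp v.re) ^ 2 + 2 * (rexp u.re * rexp v.re) * (1 - cos (u.im - v.im)) := by
    rw [← Complex.normSq_eq_norm_sq, Complex.normSq_apply, cos_sub]
    simp only [Complex.sub_re, Complex.sub_im, Complex.exp_re, Complex.exp_im]
    linear_combination rexp u.re ^ 2 * sin_sq_add_cos_sq u.im +
      rexp v.re ^ 2 * sin_sq_add_cos_sq v.im
  have h_cos := mul_le_mul_of_nonneg_left (one_sub_sq_div_two_le_cos (x := u.im - v.im))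
    (by positivity : 0 ≤ rexp u.re * rexp v.re)
  linarith

lemma fourier_neg_natCast_two_pi (n : ℕ) (θ : ℝ) :
    fourier (-(n : ℤ)) (θ : AddCircle (2 * π - 0)) = (Complex.exp (θ * Complex.I) ^ n)⁻¹ := by
  rw [fourier_coe_apply, ← Complex.exp_nat_mul, ← Complex.exp_neg]
  congr 1
  have := Complex.ofReal_ne_zero.2 pi_ne_zero
  push_cast
  field_simp
  ring

section Circle

variable {f : ℂ → ℂ} {c : ℂ} {R : ℝ}

lemma fourierCoeffOn_circleMap_natCast (hR : 0 < R) (hf : DiffContOnCl ℂ f (ball c R)) (n : ℕ) :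
    fourierCoeffOn two_pi_pos (fun θ => f (circleMap c R θ)) n = R ^ n * taylorCoeff f c n := by
  have hR' : (R : ℂ) ≠ 0 := mod_cast hR.ne'
  have h_cauchy := hf.circleIntegral_one_div_sub_center_pow_smul hR n
  have h_integrand : ∀ θ : ℝ,
      deriv (circleMap c R) θ • (1 / (circleMap c R θ - c) ^ (n + 1)) • f (circleMap c R θ) =
        Complex.I / R ^ n *
          (fourier (-(n : ℤ)) (θ : AddCircle (2 * π - 0)) • f (circleMap c R θ)) := by
    intro θ
    have := Complex.exp_ne_zero (θ * Complex.I)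
    simp only [fourier_neg_natCast_two_pi, deriv_circleMap, circleMap_sub_center, circleMap_zero,
      smul_eq_mul]
    field_simp
    ring
  simp only [circleIntegral, h_integrand, intervalIntegral.integral_const_mul] at h_cauchy
  rw [fourierCoeffOn_eq_integral, taylorCoeff, Complex.real_smul]
  have h_integral : ∫ θ in 0..2 * π,
      fourier (-(n : ℤ)) (θ : AddCircle (2 * π - 0)) • f (circleMap c R θ) =
        2 * π * R ^ n * (iteratedDeriv n f c / n !) := by
    have := Complex.I_ne_zero
    apply mul_left_cancel₀ (div_ne_zero this (pow_ne_zero n hR'))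
    rw [h_cauchy, smul_eq_mul]
    field_simp
  rw [h_integral]
  have := Complex.ofReal_ne_zero.2 pi_ne_zero
  push_cast
  field_simp
  ring

lemma hasSum_norm_sq_fourierCoeffOn_circleMap (hR : 0 ≤ R)
    (hf : ContinuousOn f (sphere c R)) :
    HasSum (fun n : ℤ => ‖fourierCoeffOn two_pi_pos (fun θ => f (circleMap c R θ)) n‖ ^ 2)
      (circleAverage (fun z => ‖f z‖ ^ 2) c R) := by
  have h_cont : Continuous fun θ => f (circleMap c R θ) :=
    hf.comp_continuous (continuous_circleMap c R) (circleMap_mem_sphere c hR)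
  have h_memLp : MemLp (fun θ => f (circleMap c R θ)) 2 (volume.restrict (Set.Ioc 0 (2 * π))) :=
    (memLp_two_iff_integrable_sq_norm h_cont.aestronglyMeasurable).2
      (h_cont.norm.pow 2).integrableOn_Ioc
  simpa only [sub_zero, circleAverage_def] using hasSum_sq_fourierCoeffOn two_pi_pos h_memLp

lemma summable_norm_sq_taylorCoeff (hR : 0 < R) (hf : DiffContOnCl ℂ f (ball c R)) :
    Summable fun n => ‖R ^ n * taylorCoeff f c n‖ ^ 2 := by
  simp only [← fourierCoeffOn_circleMap_natCast hR hf]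
  have h_parseval := hasSum_norm_sq_fourierCoeffOn_circleMap hR.le
    (hf.continuousOn_ball.mono sphere_subset_closedBall)
  exact h_parseval.summable.comp_injective Nat.cast_injective

lemma tsum_norm_sq_taylorCoeff_le_circleAverage (hR : 0 < R) (hf : DiffContOnCl ℂ f (ball c R)) :
    ∑' n, ‖R ^ n * taylorCoeff f c n‖ ^ 2 ≤ circleAverage (fun z => ‖f z‖ ^ 2) c R := by
  simp only [← fourierCoeffOn_circleMap_natCast hR hf]
  have h_parseval := hasSum_norm_sq_fourierCoeffOn_circleMap hR.le
    (hf.continuousOn_ball.mono sphere_subset_closedBall)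
  rw [← h_parseval.tsum_eq]
  exact tsum_comp_le_tsum_of_inj h_parseval.summable (fun _ => sq_nonneg _) Nat.cast_injective

lemma circleAverage_im_sq_le_circleAverage_re_sq (hf : DiffContOnCl ℂ f (ball c |R|))
    (hc : (f c).im = 0) :
    circleAverage (fun z => (f z).im ^ 2) c R ≤ circleAverage (fun z => (f z).re ^ 2) c R := by
  have h_cont : ContinuousOn f (sphere c |R|) :=
    hf.continuousOn_ball.mono sphere_subset_closedBall
  have h_re : CircleIntegrable (fun z => (f z).re ^ 2) c R :=
    ((Complex.continuous_re.comp_continuousOn h_cont).pow 2).circleIntegrable'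
  have h_im : CircleIntegrable (fun z => (f z).im ^ 2) c R :=
    ((Complex.continuous_im.comp_continuousOn h_cont).pow 2).circleIntegrable'
  have h_mean : circleAverage (fun z => (f z).re ^ 2 - (f z).im ^ 2) c R = (f c).re ^ 2 := by
    have h_sq : (fun z => (f z).re ^ 2 - (f z).im ^ 2) =
        Complex.reCLM ∘ fun z => f z • f z := by
      ext z
      simp [sq]
    rw [h_sq, Complex.reCLM.circleAverage_comp_comm (h_cont.fun_smul h_cont).circleIntegrable',
      (hf.smul hf).circleAverage]
    simp [hc, sq]
  rw [circleAverage_fun_sub h_re h_im] at h_mean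
  linarith [sq_nonneg (f c).re]

lemma circleAverage_norm_exp_sub_exp_sq_le {A B : ℂ → ℂ} {M : ℝ}
    (hA : DiffContOnCl ℂ A (ball c |R|)) (hB : DiffContOnCl ℂ B (ball c |R|))
    (hc : (A c).im = (B c).im) (hM : ∀ z ∈ sphere c |R|, rexp (A z).re * rexp (B z).re ≤ M) :
    circleAverage (fun z => ‖Complex.exp (A z) - Complex.exp (B z)‖ ^ 2) c R ≤
      circleAverage (fun z => (rexp (A z).re - rexp (B z).re) ^ 2) c R +
        M * circleAverage (fun z => ((A z).re - (B z).re) ^ 2) c R := by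
  have hA' : ContinuousOn A (sphere c |R|) := hA.continuousOn_ball.mono sphere_subset_closedBall
  have hB' : ContinuousOn B (sphere c |R|) := hB.continuousOn_ball.mono sphere_subset_closedBall
  have h_norm : CircleIntegrable (fun z => ‖Complex.exp (A z) - Complex.exp (B z)‖ ^ 2) c R :=
    ContinuousOn.circleIntegrable' (by fun_prop)
  have h_mod : CircleIntegrable (fun z => (rexp (A z).re - rexp (B z).re) ^ 2) c R :=
    ContinuousOn.circleIntegrable' (by fun_prop)
  have h_arg : CircleIntegrable (fun z => M • ((A z).im - (B z).im) ^ 2) c R :=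
    ContinuousOn.circleIntegrable' (by fun_prop)
  obtain ⟨z₀, hz₀⟩ : (sphere c |R|).Nonempty := NormedSpace.sphere_nonempty.2 (abs_nonneg R)
  have hM0 : 0 ≤ M := le_trans (by positivity) (hM z₀ hz₀)
  have h_im := circleAverage_im_sq_le_circleAverage_re_sq (hA.sub hB) (by simp [hc])
  simp only [Pi.sub_apply, Complex.sub_re, Complex.sub_im] at h_im
  calc circleAverage (fun z => ‖Complex.exp (A z) - Complex.exp (B z)‖ ^ 2) c R
      ≤ circleAverage (fun z => (rexp (A z).re - rexp (B z).re) ^ 2 +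
          M • ((A z).im - (B z).im) ^ 2) c R :=
        circleAverage_mono h_norm (h_mod.add h_arg) fun z hz =>
          (norm_exp_sub_exp_sq_le (A z) (B z)).trans <| by
            rw [smul_eq_mul]
            gcongr
            exact hM z hz
    _ = circleAverage (fun z => (rexp (A z).re - rexp (B z).re) ^ 2) c R +
          M * circleAverage (fun z => ((A z).im - (B z).im) ^ 2) c R := by
        rw [circleAverage_fun_add h_mod h_arg, circleAverage_fun_smul, smul_eq_mul]
    _ ≤ _ := by gcongr

end Circle

/-- The spectral density `e^{2 Re A(e^{ix})} = |e^{A(e^{ix})}|²` with outer factor `e^A`. -/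
noncomputable def spectralDensity (A : ℂ → ℂ) (x : ℝ) : ℝ :=
  rexp (2 * (A (circleMap 0 1 x)).re)

/-- The scaled moving-average coefficient `σ c_k` of `spectralDensity A`: the `k`-th Taylor
coefficient of `√(2π) e^A` at `0`. -/
noncomputable def maCoeff (A : ℂ → ℂ) (k : ℕ) : ℂ :=
  √(2 * π) * taylorCoeff (fun z => Complex.exp (A z)) 0 k

/-- The Taylor coefficients of `logSzego`: half of `a₀`, followed by `a₁, a₂, …`. -/
noncomputable def cepstralCoeff (a0 : ℝ) (a : ℕ → ℝ) : ℕ → ℂ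
  | 0 => a0 / 2
  | k + 1 => a (k + 1)

/-- The function `A(z) = a₀ / 2 + ∑_{k ≥ 1} a_k z^k` on the closed unit disc, whose exponential is
the Szegő function of `expSpec a0 a`. -/
noncomputable def logSzego (a0 : ℝ) (a : ℕ → ℝ) (z : ℂ) : ℂ :=
  ∑' k, cepstralCoeff a0 a k * z ^ k

section SpectralDensity

variable (A B : ℂ → ℂ) (x : ℝ)

lemma sqrt_spectralDensity : √(spectralDensity A x) = rexp (A (circleMap 0 1 x)).re := by
  rw [spectralDensity, ← exp_half]
  congr 1
  ring

lemma log_spectralDensity : log (spectralDensity A x) = 2 * (A (circleMap 0 1 x)).re :=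
  log_exp _

lemma sqrt_spectralDensity_mul :
    √(spectralDensity A x * spectralDensity B x) =
      rexp (A (circleMap 0 1 x)).re * rexp (B (circleMap 0 1 x)).re := by
  rw [sqrt_mul (x := spectralDensity A x) (exp_pos _).le, sqrt_spectralDensity,
    sqrt_spectralDensity]

end SpectralDensity

lemma norm_maCoeff_sub_sq {A B : ℂ → ℂ} (hA : AnalyticAt ℂ A 0) (hB : AnalyticAt ℂ B 0) (k : ℕ) :
    ‖maCoeff A k - maCoeff B k‖ ^ 2 = 2 * π *
      ‖taylorCoeff ((fun z => Complex.exp (A z)) - fun z => Complex.exp (B z)) 0 k‖ ^ 2 := by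
  have hA' : AnalyticAt ℂ (fun z => Complex.exp (A z)) 0 := hA.cexp
  have hB' : AnalyticAt ℂ (fun z => Complex.exp (B z)) 0 := hB.cexp
  rw [taylorCoeff_sub hA'.contDiffAt hB'.contDiffAt, maCoeff, maCoeff, ← mul_sub, norm_mul,
    mul_pow, Complex.norm_real, norm_of_nonneg (sqrt_nonneg _), sq_sqrt two_pi_pos.le]

lemma two_pi_mul_circleAverage (g : ℂ → ℝ) (c : ℂ) (R : ℝ) :
    2 * π * circleAverage g c R = ∫ θ in (0 : ℝ)..2 * π, g (circleMap c R θ) := by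
  rw [circleAverage_def, smul_eq_mul, mul_inv_cancel_left₀ two_pi_pos.ne']

lemma continuous_spectralDensity {A : ℂ → ℂ} (hA : ContinuousOn A (sphere 0 1)) :
    Continuous (spectralDensity A) := by
  have := hA.comp_continuous (continuous_circleMap 0 1) (circleMap_mem_sphere 0 zero_le_one)
  exact continuous_exp.comp (continuous_const.mul (Complex.continuous_re.comp this))

lemma exp_re_mul_exp_re_le_sSup {A B : ℂ → ℂ} (hA : ContinuousOn A (sphere 0 1))
    (hB : ContinuousOn B (sphere 0 1)) {z : ℂ} (hz : z ∈ sphere (0 : ℂ) 1) :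
    rexp (A z).re * rexp (B z).re ≤
      sSup ((fun x => √(spectralDensity A x * spectralDensity B x)) '' Set.Icc 0 (2 * π)) := by
  obtain ⟨x, hx, rfl⟩ : z ∈ circleMap 0 1 '' Set.Ioc 0 (2 * π) := by
    rwa [image_circleMap_Ioc, abs_one]
  have h_cont : Continuous fun x => √(spectralDensity A x * spectralDensity B x) :=
    ((continuous_spectralDensity hA).mul (continuous_spectralDensity hB)).sqrt
  rw [← sqrt_spectralDensity_mul]
  exact le_csSup (isCompact_Icc.bddAbove_image h_cont.continuousOn)
    (Set.mem_image_of_mem _ (Set.Ioc_subset_Icc_self hx))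

theorem statement7_general {A B : ℂ → ℂ} (hA : DiffContOnCl ℂ A (ball 0 1))
    (hB : DiffContOnCl ℂ B (ball 0 1)) (h0 : (A 0).im = (B 0).im) :
    Summable (fun k => ‖maCoeff A k - maCoeff B k‖ ^ 2) ∧
    ∑' k, ‖maCoeff A k - maCoeff B k‖ ^ 2 ≤
      (∫ x in (0 : ℝ)..2 * π, (√(spectralDensity A x) - √(spectralDensity B x)) ^ 2) +
        sSup ((fun x => √(spectralDensity A x * spectralDensity B x)) '' Set.Icc 0 (2 * π)) *
          (1 / 4 * ∫ x in (0 : ℝ)..2 * π,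
            (log (spectralDensity A x) - log (spectralDensity B x)) ^ 2) := by
  have hA0 := hA.differentiableOn.analyticAt (ball_mem_nhds 0 one_pos)
  have hB0 := hB.differentiableOn.analyticAt (ball_mem_nhds 0 one_pos)
  have h_exp : DiffContOnCl ℂ ((fun z => Complex.exp (A z)) - fun z => Complex.exp (B z))
      (ball 0 1) :=
    (Complex.differentiable_exp.comp_diffContOnCl hA).sub
      (Complex.differentiable_exp.comp_diffContOnCl hB)
  have h_summable := summable_norm_sq_taylorCoeff one_pos h_exp
  have h_bessel := tsum_norm_sq_taylorCoeff_le_circleAverage one_pos h_exp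
  have h_bound := circleAverage_norm_exp_sub_exp_sq_le (R := 1) (by rwa [abs_one])
    (by rwa [abs_one]) h0 fun z hz => exp_re_mul_exp_re_le_sSup
      (hA.continuousOn_ball.mono sphere_subset_closedBall)
      (hB.continuousOn_ball.mono sphere_subset_closedBall) (by rwa [abs_one] at hz)
  simp only [Complex.ofReal_one, one_pow, one_mul] at h_summable h_bessel
  simp only [norm_maCoeff_sub_sq hA0 hB0, tsum_mul_left]
  refine ⟨h_summable.mul_left _, ?_⟩
  have h_main := mul_le_mul_of_nonneg_left (h_bessel.trans h_bound) two_pi_pos.le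
  rw [mul_add, mul_left_comm, two_pi_mul_circleAverage, two_pi_mul_circleAverage] at h_main
  simp only [← sqrt_spectralDensity] at h_main
  have h_log (x : ℝ) : (log (spectralDensity A x) - log (spectralDensity B x)) ^ 2 =
      4 * ((A (circleMap 0 1 x)).re - (B (circleMap 0 1 x)).re) ^ 2 := by
    rw [log_spectralDensity, log_spectralDensity]
    ring
  simp only [h_log, intervalIntegral.integral_const_mul]
  linarith

section LogSzego

variable {a0 : ℝ} {a : ℕ → ℝ}

lemma summable_norm_cepstralCoeff (ha : Summable fun k => |a (k + 1)|) :
    Summable fun k => ‖cepstralCoeff a0 a k‖ := by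
  rw [← summable_nat_add_iff 1]
  simpa only [cepstralCoeff, Complex.norm_real, norm_eq_abs] using ha

lemma diffContOnCl_logSzego (ha : Summable fun k => |a (k + 1)|) :
    DiffContOnCl ℂ (logSzego a0 a) (ball 0 1) :=
  diffContOnCl_tsum_mul_pow (summable_norm_cepstralCoeff ha)

lemma logSzego_zero : logSzego a0 a 0 = a0 / 2 := by
  rw [logSzego, tsum_eq_single 0 (by simp +contextual)]
  simp [cepstralCoeff]

lemma expSpec_eq_spectralDensity (ha : Summable fun k => |a (k + 1)|) :
    expSpec a0 a = spectralDensity (logSzego a0 a) := by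
  ext x
  have h_summable : Summable fun k => cepstralCoeff a0 a k * circleMap 0 1 x ^ k := by
    refine .of_norm ?_
    simpa [norm_mul, norm_pow] using summable_norm_cepstralCoeff (a0 := a0) ha
  have h_re (k : ℕ) : (cepstralCoeff a0 a (k + 1) * circleMap 0 1 x ^ (k + 1)).re =
      a (k + 1) * cos ((k + 1) * x) := by
    rw [circleMap_zero_pow, one_pow, cepstralCoeff, Complex.re_ofReal_mul, circleMap_zero_re,
      one_mul, Nat.cast_succ]
  rw [expSpec, spectralDensity, logSzego, h_summable.tsum_eq_zero_add, Complex.add_re,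
    Complex.re_tsum ((summable_nat_add_iff 1).2 h_summable)]
  simp only [h_re]
  simp only [cepstralCoeff, pow_zero, mul_one, Complex.div_ofNat_re, Complex.ofReal_re]
  congr 1
  ring

lemma ofReal_sigmaOf_mul_eq_maCoeff {c : ℕ → ℝ} (ha : Summable fun k => |a (k + 1)|)
    (hc : IsMARecR a c) (k : ℕ) :
    ((sigmaOf a0 * c k : ℝ) : ℂ) = maCoeff (logSzego a0 a) k := by
  have h_sigma : sigmaOf a0 = √(2 * π) * rexp (a0 / 2) := by
    rw [sigmaOf, sqrt_mul two_pi_pos.le, exp_half]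
  have h_analytic : AnalyticAt ℂ (logSzego a0 a) 0 :=
    (diffContOnCl_logSzego ha).differentiableOn.analyticAt (ball_mem_nhds 0 one_pos)
  suffices h : taylorCoeff (fun z => Complex.exp (logSzego a0 a z)) 0 k =
      Complex.exp (a0 / 2) * c k by
    rw [maCoeff, h, h_sigma]
    push_cast
    ring
  induction k using Nat.strong_induction_on with
  | h k ih =>
    cases k with
    | zero => simp [logSzego_zero, hc.1]
    | succ n =>
      rw [taylorCoeff_exp_comp_succ h_analytic, hc.2]
      push_cast
      rw [Finset.mul_sum]
      refine Finset.sum_congr rfl fun j hj => ?_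
      have hj : j ≤ n := Finset.mem_range_succ_iff.1 hj
      have h_coeff : taylorCoeff (logSzego a0 a) 0 (n + 1 - j) = a (n + 1 - j) := by
        unfold logSzego
        rw [taylorCoeff_tsum_mul_pow (summable_norm_cepstralCoeff ha), Nat.sub_add_comm hj,
          cepstralCoeff]
      rw [h_coeff, ih j (Nat.lt_succ_of_le hj)]
      ring

lemma sq_sigmaOf_mul_sub_eq {b0 : ℝ} {b c d : ℕ → ℝ} (ha : Summable fun k => |a (k + 1)|)
    (hb : Summable fun k => |b (k + 1)|) (hc : IsMARecR a c) (hd : IsMARecR b d) (k : ℕ) :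
    (sigmaOf a0 * c k - sigmaOf b0 * d k) ^ 2 =
      ‖maCoeff (logSzego a0 a) k - maCoeff (logSzego b0 b) k‖ ^ 2 := by
  rw [← ofReal_sigmaOf_mul_eq_maCoeff ha hc, ← ofReal_sigmaOf_mul_eq_maCoeff hb hd,
    ← Complex.ofReal_sub, Complex.norm_real, norm_eq_abs, sq_abs]

end LogSzego

/-- For absolutely summable cepstral coefficients `(a_k)`, `(â_k)` with associated spectral
densities `f, f̂`, innovation scales `σ, σ̂` and Wold coefficients `(c_k), (ĉ_k)` obtained by
the MA recursion,
`∑_{k=0}^∞ (σ c_k - σ̂ ĉ_k)² ≤ ∫₀^{2π} (√f - √f̂)² dλ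
   + (sup_{λ ∈ [0,2π]} √(f f̂)) ∫₀^{2π} (log f - log f̂)² dλ`. -/
theorem statement7 (a0 ahat0 : ℝ) (a ahat : ℕ → ℝ)
    (ha : Summable fun k : ℕ => |a (k + 1)|)
    (hahat : Summable fun k : ℕ => |ahat (k + 1)|)
    (c chat : ℕ → ℝ) (hc : IsMARecR a c) (hchat : IsMARecR ahat chat) :
    Summable (fun k : ℕ => (sigmaOf a0 * c k - sigmaOf ahat0 * chat k) ^ 2) ∧
    ∑' k : ℕ, (sigmaOf a0 * c k - sigmaOf ahat0 * chat k) ^ 2 ≤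
      (∫ x in (0:ℝ)..(2 * Real.pi),
          (Real.sqrt (expSpec a0 a x) - Real.sqrt (expSpec ahat0 ahat x)) ^ 2) +
        sSup ((fun x => Real.sqrt (expSpec a0 a x * expSpec ahat0 ahat x)) ''
            Set.Icc (0:ℝ) (2 * Real.pi)) *
          ∫ x in (0:ℝ)..(2 * Real.pi),
            (Real.log (expSpec a0 a x) - Real.log (expSpec ahat0 ahat x)) ^ 2 := by
  simp only [sq_sigmaOf_mul_sub_eq ha hahat hc hchat, expSpec_eq_spectralDensity ha,
    expSpec_eq_spectralDensity hahat]
  refine (statement7_general (diffContOnCl_logSzego ha) (diffContOnCl_logSzego hahat)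
    (by simp [logSzego_zero])).imp_right fun h_le => h_le.trans ?_
  gcongr
  · exact sSup_nonneg (Set.forall_mem_image.2 fun _ _ => sqrt_nonneg _)
  · refine mul_le_of_le_one_left ?_ (by norm_num)
    exact intervalIntegral.integral_nonneg two_pi_pos.le fun _ _ => sq_nonneg _
end

section
/- Let f : ℝ → ℝ be a 2π-periodic, even, continuously differentiable function with 0 < m ≤ f(λ) ≤ M for all λ, and let f_n : ℝ → ℝ (n ∈ ℕ) be 2π-periodic, even, continuously differentiable functions with C₁ ≤ f_n(λ) ≤ C₂ for all λ and n, where 0 < C₁ < C₂ < ∞. Suppose sup_{λ∈[−π,π]} |f_n(λ) − f(λ)| → 0 and sup_{λ∈[−π,π]} |f_n′(λ) − f′(λ)| → 0 as n → ∞. Let a_k := a_k(log f) and â_{k,n} := a_k(log f_n) (real since f, f_n are even), and let (c_k), (ĉ_{k,n}) be obtained from (a_k)_{k≥1}, (â_{k,n})_{k≥1} by the MA recursion. Then Σ_{k=0}^∞ k² (ĉ_{k,n} − c_k)² → 0 and Σ_{k=0}^∞ |ĉ_{k,n} − c_k| → 0 as n → ∞. -/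
open MeasureTheory Filter Topology

/-!
With `A(z) = ∑_{k ≥ 1} a_k z ^ k` and `C(z) = ∑_{k ≥ 0} c_k z ^ k`, the MA recursion is the
differential equation `C' = C A'`, `C(0) = 1`, so `C = exp ∘ A`. Since the `ℓ¹` norm of coefficients
is submultiplicative, `Ĉ - C = C (exp ∘ (Â - A) - 1)` is small in `ℓ¹` as soon as `Â - A` is.
Differentiating, `(Ĉ - C)' = (Ĉ - C) A' + Ĉ (Â - A)'` is small in `ℓ²` by Young's inequality
`ℓ¹ * ℓ² ⊆ ℓ²`, provided that `(Â - A)'` is, and this also gives the smallness of `Â - A` in `ℓ¹`,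
because `∑ |x_k| ≤ (∑ k⁻²) ^ (1/2) (∑ k² x_k²) ^ (1/2)`. Finally, the coefficients of `(Â - A)'` are
among the Fourier coefficients of `f_n' / f_n - f' / f` up to taking imaginary parts, and this
function converges to zero uniformly, so Bessel's inequality concludes.
-/

section CoefficientNorms

open Finset PowerSeries
open scoped ENNReal NNReal PowerSeries

lemma tsum_sum_antidiagonal_mul_eq_tsum_mul_tsum (x y : ℕ → ℝ≥0∞) :
    ∑' n, ∑ p ∈ antidiagonal n, x p.1 * y p.2 = (∑' i, x i) * ∑' j, y j := by
  calc ∑' n, ∑ p ∈ antidiagonal n, x p.1 * y p.2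
      = ∑' n, ∑' p : antidiagonal n, x p.1.1 * y p.1.2 :=
        tsum_congr fun n ↦ (Finset.tsum_subtype (antidiagonal n) fun p ↦ x p.1 * y p.2).symm
    _ = ∑' q : Σ n, antidiagonal n, x q.2.1.1 * y q.2.1.2 :=
        (ENNReal.tsum_sigma' fun q : Σ n, antidiagonal n ↦ x q.2.1.1 * y q.2.1.2).symm
    _ = ∑' p : ℕ × ℕ, x p.1 * y p.2 :=
        HasAntidiagonal.sigmaAntidiagonalEquivProd.tsum_eq fun p : ℕ × ℕ ↦ x p.1 * y p.2
    _ = (∑' i, x i) * ∑' j, y j := by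
        rw [ENNReal.tsum_prod (f := fun i j ↦ x i * y j)]
        simp_rw [ENNReal.tsum_mul_left, ENNReal.tsum_mul_right]

variable {R : Type*} [NormedRing R]

/-- The `ℓ¹` norm of the coefficient sequence of a formal power series, possibly infinite. -/
noncomputable def coeffL1ENorm (F : R⟦X⟧) : ℝ≥0∞ := ∑' k, ‖coeff k F‖ₑ

/-- The square of the `ℓ²` norm of the coefficient sequence of a formal power series, possibly
infinite. -/
noncomputable def coeffL2ENormSq (F : R⟦X⟧) : ℝ≥0∞ := ∑' k, ‖coeff k F‖ₑ ^ 2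

lemma coeffL1ENorm_add_le (F G : R⟦X⟧) :
    coeffL1ENorm (F + G) ≤ coeffL1ENorm F + coeffL1ENorm G := by
  rw [coeffL1ENorm, coeffL1ENorm, coeffL1ENorm, ← ENNReal.tsum_add]
  exact ENNReal.tsum_le_tsum fun k ↦ by rw [map_add]; exact enorm_add_le _ _

lemma coeffL1ENorm_sub_le (F G : R⟦X⟧) :
    coeffL1ENorm (F - G) ≤ coeffL1ENorm F + coeffL1ENorm G := by
  rw [coeffL1ENorm, coeffL1ENorm, coeffL1ENorm, ← ENNReal.tsum_add]
  exact ENNReal.tsum_le_tsum fun k ↦ by rw [map_sub]; exact enorm_sub_le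

lemma coeffL2ENormSq_add_le (F G : R⟦X⟧) :
    coeffL2ENormSq (F + G) ≤ 2 * (coeffL2ENormSq F + coeffL2ENormSq G) := by
  rw [coeffL2ENormSq, coeffL2ENormSq, coeffL2ENormSq, ← ENNReal.tsum_add, ← ENNReal.tsum_mul_left]
  refine ENNReal.tsum_le_tsum fun k ↦ ?_
  calc ‖coeff k (F + G)‖ₑ ^ 2 ≤ (‖coeff k F‖ₑ + ‖coeff k G‖ₑ) ^ 2 := by
        rw [map_add]; gcongr; exact enorm_add_le _ _
    _ ≤ 2 * (‖coeff k F‖ₑ ^ 2 + ‖coeff k G‖ₑ ^ 2) := by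
        simp only [enorm]
        norm_cast
        exact add_sq_le

lemma enorm_coeff_mul_le (F G : R⟦X⟧) (n : ℕ) :
    ‖coeff n (F * G)‖ₑ ≤ ∑ p ∈ antidiagonal n, ‖coeff p.1 F‖ₑ * ‖coeff p.2 G‖ₑ := by
  rw [coeff_mul]
  refine (enorm_sum_le _ _).trans (sum_le_sum fun p _ ↦ ?_)
  simp only [enorm]
  exact_mod_cast nnnorm_mul_le _ _

lemma coeffL1ENorm_mul_le (F G : R⟦X⟧) :
    coeffL1ENorm (F * G) ≤ coeffL1ENorm F * coeffL1ENorm G :=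
  (ENNReal.tsum_le_tsum (enorm_coeff_mul_le F G)).trans
    (tsum_sum_antidiagonal_mul_eq_tsum_mul_tsum _ _).le

lemma coeffL1ENorm_one [NormOneClass R] : coeffL1ENorm (1 : R⟦X⟧) = 1 := by
  rw [coeffL1ENorm, tsum_eq_single 0 fun k hk ↦ by rw [coeff_one, if_neg hk, enorm_zero],
    coeff_zero_one, enorm_one]

lemma coeffL1ENorm_pow_le [NormOneClass R] (F : R⟦X⟧) (d : ℕ) :
    coeffL1ENorm (F ^ d) ≤ coeffL1ENorm F ^ d := by
  induction d with
  | zero => rw [pow_zero, pow_zero, coeffL1ENorm_one]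
  | succ d ih =>
    rw [pow_succ, pow_succ]
    exact (coeffL1ENorm_mul_le _ _).trans (by gcongr)

lemma enorm_coeff_mul_sq_le (F G : R⟦X⟧) (n : ℕ) :
    ‖coeff n (F * G)‖ₑ ^ 2 ≤
      coeffL1ENorm F * ∑ p ∈ antidiagonal n, ‖coeff p.1 F‖ₑ * ‖coeff p.2 G‖ₑ ^ 2 := by
  have cauchySchwarz : (∑ p ∈ antidiagonal n, ‖coeff p.1 F‖ₑ * ‖coeff p.2 G‖ₑ) ^ 2 ≤
      (∑ p ∈ antidiagonal n, ‖coeff p.1 F‖ₑ) *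
        ∑ p ∈ antidiagonal n, ‖coeff p.1 F‖ₑ * ‖coeff p.2 G‖ₑ ^ 2 := by
    simp only [enorm]
    norm_cast
    exact sum_sq_le_sum_mul_sum_of_sq_le_mul _ (fun _ _ ↦ zero_le) (fun _ _ ↦ zero_le)
      fun p _ ↦ by ring_nf; rfl
  have sum_le : ∑ p ∈ antidiagonal n, ‖coeff p.1 F‖ₑ ≤ coeffL1ENorm F := by
    rw [Nat.sum_antidiagonal_eq_sum_range_succ_mk]
    exact ENNReal.sum_le_tsum _
  calc ‖coeff n (F * G)‖ₑ ^ 2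
      ≤ (∑ p ∈ antidiagonal n, ‖coeff p.1 F‖ₑ * ‖coeff p.2 G‖ₑ) ^ 2 := by
        gcongr; exact enorm_coeff_mul_le F G n
    _ ≤ _ := cauchySchwarz
    _ ≤ _ := by gcongr

lemma coeffL2ENormSq_mul_le (F G : R⟦X⟧) :
    coeffL2ENormSq (F * G) ≤ coeffL1ENorm F ^ 2 * coeffL2ENormSq G :=
  calc coeffL2ENormSq (F * G)
      ≤ ∑' n, coeffL1ENorm F * ∑ p ∈ antidiagonal n, ‖coeff p.1 F‖ₑ * ‖coeff p.2 G‖ₑ ^ 2 :=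
        ENNReal.tsum_le_tsum (enorm_coeff_mul_sq_le F G)
    _ = coeffL1ENorm F * (coeffL1ENorm F * coeffL2ENormSq G) := by
        rw [ENNReal.tsum_mul_left, tsum_sum_antidiagonal_mul_eq_tsum_mul_tsum
          (fun i ↦ ‖coeff i F‖ₑ) fun j ↦ ‖coeff j G‖ₑ ^ 2]
        rfl
    _ = coeffL1ENorm F ^ 2 * coeffL2ENormSq G := by ring

end CoefficientNorms

section CompositionExp

open PowerSeries
open scoped Nat ENNReal NNReal PowerSeries

lemma sq_tsum_mul_le_tsum_sq_mul_tsum_sq {ι : Type*} (u v : ι → ℝ≥0) :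
    (∑' i, (u i : ℝ≥0∞) * v i) ^ 2 ≤ (∑' i, (u i : ℝ≥0∞) ^ 2) * ∑' i, (v i : ℝ≥0∞) ^ 2 := by
  rw [ENNReal.tsum_eq_iSup_sum (f := fun i ↦ (u i : ℝ≥0∞) * v i), ENNReal.iSup_pow]
  refine iSup_le fun s ↦ ?_
  calc (∑ i ∈ s, (u i : ℝ≥0∞) * v i) ^ 2
      ≤ (∑ i ∈ s, (u i : ℝ≥0∞) ^ 2) * ∑ i ∈ s, (v i : ℝ≥0∞) ^ 2 := by
        exact_mod_cast Finset.sum_mul_sq_le_sq_mul_sq s u v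
    _ ≤ _ := by gcongr <;> exact ENNReal.sum_le_tsum s

variable {𝕜 : Type*} [RCLike 𝕜] {A B C F : 𝕜⟦X⟧}

lemma tsum_enorm_inv_natCast_add_one_sq_ne_top : ∑' k : ℕ, ‖((k : 𝕜) + 1)⁻¹‖ₑ ^ 2 ≠ ∞ := by
  have summable : Summable fun k : ℕ ↦ (‖((k : 𝕜) + 1)⁻¹‖₊ : ℝ≥0) ^ 2 := by
    have shifted_summable := (summable_nat_add_iff 1).2 (Real.summable_one_div_nat_pow.2 one_lt_two)
    rw [← NNReal.summable_coe]
    refine shifted_summable.congr fun k ↦ ?_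
    rw [NNReal.coe_pow, coe_nnnorm, ← Nat.cast_add_one, norm_inv, RCLike.norm_natCast, inv_pow,
      one_div]
  simpa only [enorm, ← ENNReal.coe_pow] using ENNReal.tsum_coe_ne_top_iff_summable.2 summable

lemma coeffL1ENorm_sq_le_of_constantCoeff_eq_zero (hF : constantCoeff F = 0) :
    coeffL1ENorm F ^ 2 ≤
      (∑' k : ℕ, ‖((k : 𝕜) + 1)⁻¹‖ₑ ^ 2) * coeffL2ENormSq (d⁄dX 𝕜 F) := by
  have coeff_succ (k : ℕ) : coeff (k + 1) F = ((k : 𝕜) + 1)⁻¹ * coeff k (d⁄dX 𝕜 F) := by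
    rw [coeff_derivative]; field_simp [Nat.cast_add_one_ne_zero k]
  rw [coeffL1ENorm, tsum_eq_zero_add' ENNReal.summable, coeff_zero_eq_constantCoeff_apply, hF,
    enorm_zero, zero_add]
  simp_rw [coeff_succ, enorm_mul]
  exact sq_tsum_mul_le_tsum_sq_mul_tsum_sq _ _

lemma coeffL1ENorm_ne_top_of_derivative (hF : constantCoeff F = 0)
    (hF'_fin : coeffL2ENormSq (d⁄dX 𝕜 F) ≠ ∞) : coeffL1ENorm F ≠ ∞ := by
  refine (ENNReal.pow_ne_top_iff.1 (ne_top_of_le_ne_top ?_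
    (coeffL1ENorm_sq_le_of_constantCoeff_eq_zero hF))).resolve_right two_ne_zero
  exact ENNReal.mul_ne_top tsum_enorm_inv_natCast_add_one_sq_ne_top hF'_fin

lemma enorm_coeff_subst_le (G : 𝕜⟦X⟧) (hA : constantCoeff A = 0) (n : ℕ) :
    ‖coeff n (G.subst A)‖ₑ ≤ ∑' d, ‖coeff d G‖ₑ * ‖coeff n (A ^ d)‖ₑ := by
  have hsubst := HasSubst.of_constantCoeff_zero' hA
  rw [coeff_subst' hsubst,
    ← tsum_eq_finsum (L := .unconditional ℕ) (coeff_subst_finite' hsubst G n)]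
  exact enorm_tsum_le_tsum_enorm.trans_eq (tsum_congr fun d ↦ by rw [smul_eq_mul, enorm_mul])

lemma coeffL1ENorm_subst_le (G : 𝕜⟦X⟧) (hA : constantCoeff A = 0) :
    coeffL1ENorm (G.subst A) ≤ ∑' d, ‖coeff d G‖ₑ * coeffL1ENorm A ^ d :=
  calc coeffL1ENorm (G.subst A)
      ≤ ∑' n, ∑' d, ‖coeff d G‖ₑ * ‖coeff n (A ^ d)‖ₑ :=
        ENNReal.tsum_le_tsum (enorm_coeff_subst_le G hA)
    _ = ∑' d, ‖coeff d G‖ₑ * coeffL1ENorm (A ^ d) := by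
        rw [ENNReal.tsum_comm]
        exact tsum_congr fun d ↦ ENNReal.tsum_mul_left
    _ ≤ ∑' d, ‖coeff d G‖ₑ * coeffL1ENorm A ^ d := by
        gcongr with d; exact coeffL1ENorm_pow_le A d

lemma coeffL1ENorm_subst_le_mul (G : 𝕜⟦X⟧) (hG : constantCoeff G = 0) (hA : constantCoeff A = 0)
    (hA_le : coeffL1ENorm A ≤ 1) :
    coeffL1ENorm (G.subst A) ≤ coeffL1ENorm G * coeffL1ENorm A := by
  refine (coeffL1ENorm_subst_le G hA).trans ?_
  rw [coeffL1ENorm.eq_def G, ← ENNReal.tsum_mul_right]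
  refine ENNReal.tsum_le_tsum fun d ↦ ?_
  rcases eq_or_ne d 0 with rfl | hd
  · rw [coeff_zero_eq_constantCoeff_apply, hG, enorm_zero, zero_mul, zero_mul]
  · gcongr; exact pow_le_of_le_one zero_le hA_le hd

/-- The composition `exp ∘ A` of formal power series, meaningful when `A` has zero constant
coefficient. -/
noncomputable def expComp (A : 𝕜⟦X⟧) : 𝕜⟦X⟧ := (exp 𝕜).subst A

lemma enorm_coeff_exp (d : ℕ) : ‖coeff d (exp 𝕜)‖ₑ = ENNReal.ofReal (d ! : ℝ)⁻¹ := by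
  rw [coeff_exp, one_div, map_inv₀, map_natCast, ← ofReal_norm, norm_inv,
    RCLike.norm_natCast]

lemma coeffL1ENorm_expComp_ne_top (hA : constantCoeff A = 0) (hA_fin : coeffL1ENorm A ≠ ∞) :
    coeffL1ENorm (expComp A) ≠ ∞ := by
  refine ne_top_of_le_ne_top ?_ (coeffL1ENorm_subst_le (exp 𝕜) hA)
  rw [← ENNReal.ofReal_toReal hA_fin]
  simp_rw [enorm_coeff_exp, ← ENNReal.ofReal_pow ENNReal.toReal_nonneg,
    ← ENNReal.ofReal_mul (inv_nonneg.2 (Nat.cast_nonneg _)), inv_mul_eq_div]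
  exact (Real.summable_pow_div_factorial _).tsum_ofReal_ne_top

lemma coeffL1ENorm_exp_sub_one_ne_top : coeffL1ENorm (exp 𝕜 - 1) ≠ ∞ := by
  have exp_ne_top : coeffL1ENorm (exp 𝕜) ≠ ∞ := by
    simp_rw [coeffL1ENorm, enorm_coeff_exp]
    simpa only [one_pow, one_div] using (Real.summable_pow_div_factorial 1).tsum_ofReal_ne_top
  refine ne_top_of_le_ne_top ?_ (coeffL1ENorm_sub_le _ _)
  exact ENNReal.add_ne_top.2 ⟨exp_ne_top, coeffL1ENorm_one.trans_ne ENNReal.one_ne_top⟩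

lemma expComp_sub_one (hA : constantCoeff A = 0) : expComp A - 1 = (exp 𝕜 - 1).subst A := by
  have hsubst := HasSubst.of_constantCoeff_zero' hA
  rw [expComp, subst_sub hsubst, ← coe_substAlgHom hsubst, map_one]

lemma constantCoeff_expComp (hA : constantCoeff A = 0) : constantCoeff (expComp A) = 1 := by
  have hsub : constantCoeff (expComp A - 1) = 0 := by
    rw [expComp_sub_one hA]
    exact constantCoeff_subst_eq_zero hA _ (by rw [map_sub, constantCoeff_exp, map_one, sub_self])
  rwa [map_sub, map_one, sub_eq_zero] at hsub

lemma derivative_expComp (hA : constantCoeff A = 0) :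
    d⁄dX 𝕜 (expComp A) = expComp A * d⁄dX 𝕜 A := by
  rw [expComp, derivative_subst (HasSubst.of_constantCoeff_zero' hA), derivative_exp]

lemma eq_expComp_of_derivative_eq (hA : constantCoeff A = 0) (hC : constantCoeff C = 1)
    (hderiv : d⁄dX 𝕜 C = C * d⁄dX 𝕜 A) : C = expComp A := by
  have hE : constantCoeff (expComp A) ≠ 0 := by simp [constantCoeff_expComp hA]
  suffices C * (expComp A)⁻¹ = 1 by
    rw [← (PowerSeries.eq_mul_inv_iff_mul_eq hE).1 this.symm, one_mul]
  refine derivative.ext ?_ ?_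
  · rw [Derivation.leibniz, derivative_inv', hderiv, derivative_expComp hA, derivative_one]
    simp only [smul_eq_mul]
    have inv_mul := PowerSeries.inv_mul_cancel _ hE
    linear_combination (-(C * (expComp A)⁻¹ * d⁄dX 𝕜 A)) * inv_mul
  · rw [map_mul, hC, constantCoeff_inv, constantCoeff_expComp hA, inv_one, one_mul, map_one]

lemma expComp_add (hA : constantCoeff A = 0) (hB : constantCoeff B = 0) :
    expComp (A + B) = expComp A * expComp B := by
  refine (eq_expComp_of_derivative_eq (by rw [map_add, hA, hB, add_zero]) ?_ ?_).symm
  · rw [map_mul, constantCoeff_expComp hA, constantCoeff_expComp hB, mul_one]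
  · rw [Derivation.leibniz, derivative_expComp hA, derivative_expComp hB, map_add]
    simp only [smul_eq_mul]
    ring

lemma coeffL1ENorm_expComp_sub_one_le (hA : constantCoeff A = 0) (hA_le : coeffL1ENorm A ≤ 1) :
    coeffL1ENorm (expComp A - 1) ≤ coeffL1ENorm (exp 𝕜 - 1) * coeffL1ENorm A := by
  rw [expComp_sub_one hA]
  exact coeffL1ENorm_subst_le_mul _ (by rw [map_sub, constantCoeff_exp, map_one, sub_self]) hA hA_le

lemma expComp_sub_expComp (hA : constantCoeff A = 0) (hB : constantCoeff B = 0) :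
    expComp B - expComp A = expComp A * (expComp (B - A) - 1) := by
  rw [mul_sub, mul_one, ← expComp_add hA (by rw [map_sub, hA, hB, sub_zero]), add_sub_cancel]

lemma derivative_expComp_sub_expComp (hA : constantCoeff A = 0) (hB : constantCoeff B = 0) :
    d⁄dX 𝕜 (expComp B - expComp A) =
      (expComp B - expComp A) * d⁄dX 𝕜 A +
        ((expComp B - expComp A) + expComp A) * d⁄dX 𝕜 (B - A) := by
  rw [map_sub, map_sub, derivative_expComp hA, derivative_expComp hB]
  ring

end CompositionExp

section Stability

open PowerSeries
open scoped ENNReal PowerSeries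

variable {𝕜 ι : Type*} [RCLike 𝕜] {l : Filter ι} {A : 𝕜⟦X⟧} {B F : ι → 𝕜⟦X⟧}

lemma tendsto_coeffL1ENorm_of_derivative (hF : ∀ i, constantCoeff (F i) = 0)
    (hlim : Tendsto (fun i ↦ coeffL2ENormSq (d⁄dX 𝕜 (F i))) l (𝓝 0)) :
    Tendsto (fun i ↦ coeffL1ENorm (F i)) l (𝓝 0) := by
  have sq_bound_tendsto := ENNReal.Tendsto.const_mul hlim
    (.inr (tsum_enorm_inv_natCast_add_one_sq_ne_top (𝕜 := 𝕜)))
  rw [mul_zero] at sq_bound_tendsto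
  refine ENNReal.tendsto_nhds_zero.2 fun ε hε ↦ ?_
  filter_upwards [sq_bound_tendsto.eventually_le_const (ENNReal.pow_pos hε 2)] with i hi
  exact (ENNReal.pow_le_pow_left_iff two_ne_zero).1
    ((coeffL1ENorm_sq_le_of_constantCoeff_eq_zero (hF i)).trans hi)

lemma tendsto_coeffL1ENorm_expComp_sub (hA : constantCoeff A = 0)
    (hB : ∀ i, constantCoeff (B i) = 0) (hA_fin : coeffL1ENorm A ≠ ∞)
    (hlim : Tendsto (fun i ↦ coeffL1ENorm (B i - A)) l (𝓝 0)) :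
    Tendsto (fun i ↦ coeffL1ENorm (expComp (B i) - expComp A)) l (𝓝 0) := by
  have hsub (i : ι) : constantCoeff (B i - A) = 0 := by rw [map_sub, hA, hB, sub_zero]
  have bound : ∀ᶠ i in l, coeffL1ENorm (expComp (B i) - expComp A) ≤
      coeffL1ENorm (expComp A) * (coeffL1ENorm (exp 𝕜 - 1) * coeffL1ENorm (B i - A)) := by
    filter_upwards [hlim.eventually_le_const one_pos] with i hi
    rw [expComp_sub_expComp hA (hB i)]
    refine (coeffL1ENorm_mul_le _ _).trans ?_
    gcongr
    exact coeffL1ENorm_expComp_sub_one_le (hsub i) hi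
  have bound_tendsto := ENNReal.Tendsto.const_mul
    (ENNReal.Tendsto.const_mul hlim (.inr (coeffL1ENorm_exp_sub_one_ne_top (𝕜 := 𝕜))))
    (.inr (coeffL1ENorm_expComp_ne_top hA hA_fin))
  rw [mul_zero, mul_zero] at bound_tendsto
  exact tendsto_of_tendsto_of_tendsto_of_le_of_le' tendsto_const_nhds bound_tendsto
    (.of_forall fun _ ↦ zero_le) bound

lemma tendsto_coeffL2ENormSq_derivative_expComp_sub (hA : constantCoeff A = 0)
    (hB : ∀ i, constantCoeff (B i) = 0) (hA_fin : coeffL1ENorm A ≠ ∞)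
    (hA'_fin : coeffL2ENormSq (d⁄dX 𝕜 A) ≠ ∞)
    (hlim : Tendsto (fun i ↦ coeffL1ENorm (B i - A)) l (𝓝 0))
    (hlim' : Tendsto (fun i ↦ coeffL2ENormSq (d⁄dX 𝕜 (B i - A))) l (𝓝 0)) :
    Tendsto (fun i ↦ coeffL2ENormSq (d⁄dX 𝕜 (expComp (B i) - expComp A))) l (𝓝 0) := by
  set D := fun i ↦ expComp (B i) - expComp A with hD_def
  have hD : Tendsto (fun i ↦ coeffL1ENorm (D i)) l (𝓝 0) :=
    tendsto_coeffL1ENorm_expComp_sub hA hB hA_fin hlim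
  have hE_fin : coeffL1ENorm (expComp A) ≠ ∞ := coeffL1ENorm_expComp_ne_top hA hA_fin
  have bound (i : ι) : coeffL2ENormSq (d⁄dX 𝕜 (D i)) ≤
      2 * (coeffL1ENorm (D i) ^ 2 * coeffL2ENormSq (d⁄dX 𝕜 A) +
        (coeffL1ENorm (D i) + coeffL1ENorm (expComp A)) ^ 2 *
          coeffL2ENormSq (d⁄dX 𝕜 (B i - A))) := by
    rw [hD_def, derivative_expComp_sub_expComp hA (hB i)]
    refine (coeffL2ENormSq_add_le _ _).trans ?_
    gcongr
    · exact coeffL2ENormSq_mul_le _ _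
    · refine (coeffL2ENormSq_mul_le _ _).trans ?_
      gcongr
      exact coeffL1ENorm_add_le _ _
  have bound_tendsto := ENNReal.Tendsto.const_mul (a := 2)
    ((ENNReal.Tendsto.mul_const (ENNReal.Tendsto.pow (n := 2) hD) (.inr hA'_fin)).add
      (ENNReal.Tendsto.mul
        (ENNReal.Tendsto.pow (n := 2) (hD.add_const (coeffL1ENorm (expComp A))))
        (.inr ENNReal.zero_ne_top) hlim' (.inr (by simpa using hE_fin))))
    (.inr ENNReal.ofNat_ne_top)
  simp only [ne_eq, OfNat.ofNat_ne_zero, not_false_eq_true, zero_pow, zero_mul, mul_zero,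
    add_zero] at bound_tendsto
  exact tendsto_of_tendsto_of_tendsto_of_le_of_le tendsto_const_nhds bound_tendsto
    (fun _ ↦ zero_le) bound

end Stability

section MovingAverage

open PowerSeries
open scoped PowerSeries

/-- The exponent `A(z) = ∑_{k ≥ 1} a_k z ^ k`, for which the MA recursion says
`∑_{k ≥ 0} c_k z ^ k = exp (A(z))`. -/
noncomputable def maExponent (a : ℕ → ℝ) : ℝ⟦X⟧ := X * mk fun k ↦ a (k + 1)

variable {a b c : ℕ → ℝ}

lemma constantCoeff_maExponent : constantCoeff (maExponent a) = 0 := by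
  rw [maExponent, map_mul, constantCoeff_X, zero_mul]

lemma coeff_derivative_maExponent (k : ℕ) :
    coeff k (d⁄dX ℝ (maExponent a)) = ((k + 1 : ℕ) : ℝ) * a (k + 1) := by
  rw [coeff_derivative, maExponent, coeff_succ_X_mul, coeff_mk, mul_comm, Nat.cast_add_one]

lemma maExponent_sub : maExponent (a - b) = maExponent a - maExponent b := by
  rw [maExponent, maExponent, maExponent, ← mul_sub]
  rfl

lemma IsMARecR.derivative_mk (h : IsMARecR a c) :
    d⁄dX ℝ (mk c) = mk c * d⁄dX ℝ (maExponent a) := by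
  ext k
  rw [coeff_derivative, coeff_mk, h.2 k, coeff_mul,
    Finset.Nat.sum_antidiagonal_eq_sum_range_succ_mk, Finset.sum_mul]
  refine Finset.sum_congr rfl fun j hj ↦ ?_
  have hjk : j ≤ k := Nat.lt_succ_iff.1 (Finset.mem_range.1 hj)
  rw [coeff_mk, coeff_derivative_maExponent, ← Nat.sub_add_comm hjk,
    Nat.cast_sub (hjk.trans k.le_succ), Nat.cast_add_one]
  field_simp

lemma IsMARecR.mk_eq_expComp (h : IsMARecR a c) : mk c = expComp (maExponent a) :=
  eq_expComp_of_derivative_eq constantCoeff_maExponent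
    (by rw [← coeff_zero_eq_constantCoeff_apply, coeff_mk, h.1]) h.derivative_mk

lemma tsum_ofReal_abs_sub_eq_coeffL1ENorm (b c : ℕ → ℝ) :
    ∑' k, ENNReal.ofReal |b k - c k| = coeffL1ENorm (mk b - mk c) :=
  tsum_congr fun k ↦ by rw [map_sub, coeff_mk, coeff_mk, Real.enorm_eq_ofReal_abs]

lemma tsum_ofReal_sq_mul_sub_sq_eq_coeffL2ENormSq (b c : ℕ → ℝ) :
    ∑' k : ℕ, ENNReal.ofReal ((k : ℝ) ^ 2 * (b k - c k) ^ 2) =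
      coeffL2ENormSq (d⁄dX ℝ (mk b - mk c)) := by
  rw [tsum_eq_zero_add' ENNReal.summable]
  rw [Nat.cast_zero, zero_pow two_ne_zero, zero_mul, ENNReal.ofReal_zero, zero_add]
  refine tsum_congr fun k ↦ ?_
  rw [coeff_derivative, map_sub, coeff_mk, coeff_mk, ← mul_pow, ← sq_abs,
    ENNReal.ofReal_pow (abs_nonneg _), ← Real.enorm_eq_ofReal_abs, mul_comm, Nat.cast_add_one]

end MovingAverage

section FourierCoefficients

open PowerSeries
open scoped Real PowerSeries Interval

variable {g g' h h' : ℝ → ℝ}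

lemma cosFourierCoef_sub (hg : IntervalIntegrable g volume (-π) π)
    (hh : IntervalIntegrable h volume (-π) π) :
    cosFourierCoef (g - h) = cosFourierCoef g - cosFourierCoef h := by
  funext k
  have hcos : ContinuousOn (fun x ↦ Real.cos (k * x)) [[-π, π]] := by fun_prop
  simp only [cosFourierCoef, Pi.sub_apply, sub_mul]
  rw [intervalIntegral.integral_sub (hg.mul_continuousOn hcos) (hh.mul_continuousOn hcos), mul_sub]

lemma natCast_mul_cosFourierCoef (hg : ∀ x ∈ [[-π, π]], HasDerivAt g (g' x) x)
    (hg' : IntervalIntegrable g' volume (-π) π) (k : ℕ) :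
    k * cosFourierCoef g k = (1 / (2 * π)) * -∫ x in (-π)..π, g' x * Real.sin (k * x) := by
  have hsin (x : ℝ) : HasDerivAt (fun x ↦ Real.sin (k * x)) (k * Real.cos (k * x)) x := by
    simpa [mul_comm] using ((hasDerivAt_id x).const_mul (k : ℝ)).sin
  have parts := intervalIntegral.integral_mul_deriv_eq_deriv_mul hg (fun x _ ↦ hsin x) hg'
    (Continuous.intervalIntegrable (by fun_prop) _ _)
  simp only [mul_neg, Real.sin_neg, Real.sin_nat_mul_pi, mul_zero, neg_zero, sub_zero, zero_sub]
    at parts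
  rw [cosFourierCoef, mul_left_comm, ← intervalIntegral.integral_const_mul, ← parts]
  simp only [mul_left_comm]

lemma im_fourier_neg_smul_ofReal (k : ℕ) (x y : ℝ) :
    (fourier (-(k : ℤ)) (x : AddCircle (π - -π)) • (y : ℂ)).im = -(y * Real.sin (k * x)) := by
  have exponent_eq : 2 * π * Complex.I * ((-k : ℤ) : ℂ) * x / ((π - -π : ℝ) : ℂ) =
      ((-(k * x) : ℝ) : ℂ) * Complex.I := by
    push_cast
    field_simp
    ring
  rw [fourier_coe_apply, exponent_eq, smul_eq_mul, Complex.im_mul_ofReal,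
    Complex.exp_ofReal_mul_I_im, Real.sin_neg, neg_mul, mul_comm]

lemma natCast_mul_cosFourierCoef_eq_im_fourierCoeffOn
    (hg : ∀ x ∈ [[-π, π]], HasDerivAt g (g' x) x)
    (hg' : IntervalIntegrable g' volume (-π) π) (k : ℕ) :
    k * cosFourierCoef g k =
      (fourierCoeffOn (neg_lt_self Real.pi_pos) (fun x ↦ (g' x : ℂ)) k).im := by
  have integrand_integrable : IntervalIntegrable
      (fun x : ℝ ↦ fourier (-(k : ℤ)) (x : AddCircle (π - -π)) • (g' x : ℂ)) volume (-π) π :=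
    IntervalIntegrable.continuousOn_mul ⟨hg'.1.ofReal, hg'.2.ofReal⟩ (by fun_prop)
  have integral_im : (∫ x in (-π)..π, fourier (-(k : ℤ)) (x : AddCircle (π - -π)) • (g' x : ℂ)).im =
      -∫ x in (-π)..π, g' x * Real.sin (k * x) := by
    rw [← Complex.imCLM_apply, ← Complex.imCLM.intervalIntegral_comp_comm integrand_integrable,
      ← intervalIntegral.integral_neg]
    simp only [Complex.imCLM_apply, im_fourier_neg_smul_ofReal]
  rw [natCast_mul_cosFourierCoef hg hg', fourierCoeffOn_eq_integral, Complex.smul_im, integral_im,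
    smul_eq_mul, sub_neg_eq_add, two_mul]

lemma coeffL2ENormSq_derivative_maExponent_cosFourierCoef_le
    (hg : ∀ x ∈ [[-π, π]], HasDerivAt g (g' x) x)
    (hg' : MemLp g' 2 (volume.restrict (Set.Ioc (-π) π))) :
    coeffL2ENormSq (d⁄dX ℝ (maExponent (cosFourierCoef g))) ≤
      ENNReal.ofReal ((2 * π)⁻¹ * ∫ x in (-π)..π, g' x ^ 2) := by
  set γ : ℤ → ℂ := fourierCoeffOn (neg_lt_self Real.pi_pos) (fun x ↦ (g' x : ℂ))
  have hg'_int : IntervalIntegrable g' volume (-π) π :=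
    (intervalIntegrable_iff_integrableOn_Ioc_of_le (neg_lt_self Real.pi_pos).le).2
      (hg'.integrable one_le_two)
  have parseval : HasSum (fun k ↦ ‖γ k‖ ^ 2) ((2 * π)⁻¹ * ∫ x in (-π)..π, g' x ^ 2) := by
    simpa [two_mul] using
      hasSum_sq_fourierCoeffOn (neg_lt_self Real.pi_pos) (hg'.ofReal (K := ℂ))
  have coeff_le (k : ℕ) : ‖coeff k (d⁄dX ℝ (maExponent (cosFourierCoef g)))‖ₑ ^ 2 ≤
      ENNReal.ofReal (‖γ ((k + 1 : ℕ) : ℤ)‖ ^ 2) := by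
    rw [coeff_derivative_maExponent, natCast_mul_cosFourierCoef_eq_im_fourierCoeffOn hg hg'_int,
      Real.enorm_eq_ofReal_abs, ← ENNReal.ofReal_pow (abs_nonneg _)]
    gcongr
    exact Complex.abs_im_le_norm _
  calc coeffL2ENormSq (d⁄dX ℝ (maExponent (cosFourierCoef g)))
      ≤ ∑' k : ℕ, ENNReal.ofReal (‖γ ((k + 1 : ℕ) : ℤ)‖ ^ 2) := ENNReal.tsum_le_tsum coeff_le
    _ ≤ ∑' k : ℤ, ENNReal.ofReal (‖γ k‖ ^ 2) :=
        ENNReal.tsum_comp_le_tsum_of_injective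
          (Nat.cast_injective.comp Nat.succ_injective) fun k ↦ ENNReal.ofReal (‖γ k‖ ^ 2)
    _ = ENNReal.ofReal ((2 * π)⁻¹ * ∫ x in (-π)..π, g' x ^ 2) := by
        rw [← ENNReal.ofReal_tsum_of_nonneg (fun k ↦ sq_nonneg ‖γ k‖) parseval.summable,
          parseval.tsum_eq]

lemma coeffL2ENormSq_derivative_maExponent_sub_le
    (hg : ∀ x ∈ [[-π, π]], HasDerivAt g (g' x) x)
    (hg' : MemLp g' 2 (volume.restrict (Set.Ioc (-π) π)))
    (hh : ∀ x ∈ [[-π, π]], HasDerivAt h (h' x) x)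
    (hh' : MemLp h' 2 (volume.restrict (Set.Ioc (-π) π))) :
    coeffL2ENormSq (d⁄dX ℝ (maExponent (cosFourierCoef g) - maExponent (cosFourierCoef h))) ≤
      ENNReal.ofReal ((2 * π)⁻¹ * ∫ x in (-π)..π, (g' x - h' x) ^ 2) := by
  have hg_int : IntervalIntegrable g volume (-π) π :=
    ContinuousOn.intervalIntegrable fun x hx ↦ (hg x hx).continuousAt.continuousWithinAt
  have hh_int : IntervalIntegrable h volume (-π) π :=
    ContinuousOn.intervalIntegrable fun x hx ↦ (hh x hx).continuousAt.continuousWithinAt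
  rw [← maExponent_sub, ← cosFourierCoef_sub hg_int hh_int]
  exact coeffL2ENormSq_derivative_maExponent_cosFourierCoef_le
    (fun x hx ↦ (hg x hx).sub (hh x hx)) (hg'.sub hh')

end FourierCoefficients

section Convergence

open PowerSeries
open scoped Real ENNReal PowerSeries Interval

variable {ι : Type*} {l : Filter ι}

theorem IsMARecR.tendsto_of_tendsto_integral_deriv_sub_sq {g g' : ℝ → ℝ} {gn gn' : ι → ℝ → ℝ}
    {c : ℕ → ℝ} {chat : ι → ℕ → ℝ}
    (hc : IsMARecR (cosFourierCoef g) c) (hchat : ∀ i, IsMARecR (cosFourierCoef (gn i)) (chat i))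
    (hg : ∀ x ∈ [[-π, π]], HasDerivAt g (g' x) x)
    (hg' : MemLp g' 2 (volume.restrict (Set.Ioc (-π) π)))
    (hgn : ∀ᶠ i in l, ∀ x ∈ [[-π, π]], HasDerivAt (gn i) (gn' i x) x)
    (hgn' : ∀ᶠ i in l, MemLp (gn' i) 2 (volume.restrict (Set.Ioc (-π) π)))
    (hlim : Tendsto (fun i ↦ ∫ x in (-π)..π, (gn' i x - g' x) ^ 2) l (𝓝 0)) :
    Tendsto (fun i ↦ ∑' k : ℕ, ENNReal.ofReal ((k : ℝ) ^ 2 * (chat i k - c k) ^ 2)) l (𝓝 0) ∧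
      Tendsto (fun i ↦ ∑' k, ENNReal.ofReal |chat i k - c k|) l (𝓝 0) := by
  set A := maExponent (cosFourierCoef g)
  set B := fun i ↦ maExponent (cosFourierCoef (gn i))
  have hA'_fin : coeffL2ENormSq (d⁄dX ℝ A) ≠ ∞ := ne_top_of_le_ne_top ENNReal.ofReal_ne_top
    (coeffL2ENormSq_derivative_maExponent_cosFourierCoef_le hg hg')
  have hA_fin : coeffL1ENorm A ≠ ∞ :=
    coeffL1ENorm_ne_top_of_derivative constantCoeff_maExponent hA'_fin
  have exponent_lim' : Tendsto (fun i ↦ coeffL2ENormSq (d⁄dX ℝ (B i - A))) l (𝓝 0) := by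
    have bound_tendsto := ENNReal.tendsto_ofReal (hlim.const_mul (2 * π)⁻¹)
    rw [mul_zero, ENNReal.ofReal_zero] at bound_tendsto
    refine tendsto_of_tendsto_of_tendsto_of_le_of_le' tendsto_const_nhds bound_tendsto
      (.of_forall fun _ ↦ zero_le) ?_
    filter_upwards [hgn, hgn'] with i hi hi'
    exact coeffL2ENormSq_derivative_maExponent_sub_le hi hi' hg hg'
  have exponent_lim : Tendsto (fun i ↦ coeffL1ENorm (B i - A)) l (𝓝 0) :=
    tendsto_coeffL1ENorm_of_derivative
      (fun i ↦ by rw [map_sub, constantCoeff_maExponent, constantCoeff_maExponent, sub_zero])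
      exponent_lim'
  simp only [tsum_ofReal_abs_sub_eq_coeffL1ENorm, tsum_ofReal_sq_mul_sub_sq_eq_coeffL2ENormSq,
    hc.mk_eq_expComp, (hchat _).mk_eq_expComp]
  exact ⟨tendsto_coeffL2ENormSq_derivative_expComp_sub constantCoeff_maExponent
      (fun _ ↦ constantCoeff_maExponent) hA_fin hA'_fin exponent_lim exponent_lim',
    tendsto_coeffL1ENorm_expComp_sub constantCoeff_maExponent
      (fun _ ↦ constantCoeff_maExponent) hA_fin exponent_lim⟩

lemma eventually_forall_pos_of_tendstoUniformlyOn {α : Type*} [TopologicalSpace α] {s : Set α}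
    (hs : IsCompact s) {f : α → ℝ} {fn : ι → α → ℝ} (hf : ContinuousOn f s)
    (hf_pos : ∀ x ∈ s, 0 < f x) (hlim : TendstoUniformlyOn fn f l s) :
    ∀ᶠ i in l, ∀ x ∈ s, 0 < fn i x := by
  obtain ⟨δ, hδ, hδ_le⟩ := hs.exists_forall_le' hf hf_pos
  filter_upwards [hlim.neg.eventually_forall_lt (neg_lt_zero.2 hδ)
    fun x hx ↦ neg_le_neg (hδ_le x hx)] with i hi x hx
  exact neg_lt_zero.1 (hi x hx)

lemma tendstoUniformlyOn_div_of_isCompact {α : Type*} [TopologicalSpace α] {s : Set α}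
    (hs : IsCompact s) {f g : α → ℝ} {fn gn : ι → α → ℝ} (hf : ContinuousOn f s)
    (hg : ContinuousOn g s) (hg_ne : ∀ x ∈ s, g x ≠ 0) (hfn : TendstoUniformlyOn fn f l s)
    (hgn : TendstoUniformlyOn gn g l s) : TendstoUniformlyOn (fn / gn) (f / g) l s := by
  rw [← tendstoLocallyUniformlyOn_iff_tendstoUniformlyOn_of_compact hs] at *
  exact hfn.div₀ hgn hf hg hg_ne

lemma tendsto_integral_sub_sq_of_tendstoUniformlyOn [l.IsCountablyGenerated] {a b : ℝ}
    {f : ℝ → ℝ} {fn : ι → ℝ → ℝ} (hf : ContinuousOn f [[a, b]])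
    (hfn : ∀ᶠ i in l, ContinuousOn (fn i) [[a, b]]) (hlim : TendstoUniformlyOn fn f l [[a, b]]) :
    Tendsto (fun i ↦ ∫ x in a..b, (fn i x - f x) ^ 2) l (𝓝 0) := by
  have sub_sq : TendstoUniformlyOn (fun i x ↦ (fn i x - f x) ^ 2) 0 l [[a, b]] := by
    rw [Metric.tendstoUniformlyOn_iff] at hlim ⊢
    intro ε hε
    filter_upwards [hlim (√ε) (Real.sqrt_pos.2 hε)] with i hi x hx
    rw [Pi.zero_apply, dist_zero_left, norm_pow, ← dist_eq_norm, dist_comm]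
    exact (Real.lt_sqrt dist_nonneg).1 (hi x hx)
  simpa using sub_sq.tendsto_intervalIntegral_of_continuousOn
    (hfn.mono fun i hi ↦ (hi.sub hf).pow 2)

lemma memLp_restrict_Ioc_of_continuousOn {a b : ℝ} {f : ℝ → ℝ} (hf : ContinuousOn f [[a, b]])
    (p : ℝ≥0∞) : MemLp f p (volume.restrict (Set.Ioc a b)) := by
  have hsub : Set.Ioc a b ⊆ [[a, b]] := Set.Ioc_subset_Icc_self.trans Set.Icc_subset_uIcc
  obtain ⟨K, hK⟩ := isCompact_uIcc.exists_bound_of_continuousOn hf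
  exact .of_bound ((hf.mono hsub).aestronglyMeasurable measurableSet_Ioc) K
    (ae_restrict_of_forall_mem measurableSet_Ioc fun x hx ↦ hK x (hsub hx))

theorem statement10_general [l.IsCountablyGenerated] {f : ℝ → ℝ} {fn : ι → ℝ → ℝ}
    (hf_pos : ∀ x ∈ Set.Icc (-π) π, 0 < f x)
    (hf_smooth : ContDiff ℝ 1 f) (hfn_smooth : ∀ i, ContDiff ℝ 1 (fn i))
    (hunif : TendstoUniformlyOn fn f l (Set.Icc (-π) π))
    (hunif' : TendstoUniformlyOn (fun i ↦ deriv (fn i)) (deriv f) l (Set.Icc (-π) π))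
    {c : ℕ → ℝ} {chat : ι → ℕ → ℝ}
    (hc : IsMARecR (cosFourierCoef fun x ↦ Real.log (f x)) c)
    (hchat : ∀ i, IsMARecR (cosFourierCoef fun x ↦ Real.log (fn i x)) (chat i)) :
    Tendsto (fun i ↦ ∑' k : ℕ, ENNReal.ofReal ((k : ℝ) ^ 2 * (chat i k - c k) ^ 2)) l (𝓝 0) ∧
      Tendsto (fun i ↦ ∑' k, ENNReal.ofReal |chat i k - c k|) l (𝓝 0) := by
  rw [← Set.uIcc_of_le (neg_lt_self Real.pi_pos).le] at hf_pos hunif hunif'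
  have hfn_pos : ∀ᶠ i in l, ∀ x ∈ [[-π, π]], 0 < fn i x :=
    eventually_forall_pos_of_tendstoUniformlyOn isCompact_uIcc hf_smooth.continuous.continuousOn
      hf_pos hunif
  have logDeriv_cont {u : ℝ → ℝ} (hu : ContDiff ℝ 1 u) (hu_pos : ∀ x ∈ [[-π, π]], 0 < u x) :
      ContinuousOn (deriv u / u) [[-π, π]] :=
    (hu.continuous_deriv le_rfl).continuousOn.div hu.continuous.continuousOn
      fun x hx ↦ (hu_pos x hx).ne'
  have log_hasDerivAt {u : ℝ → ℝ} (hu : ContDiff ℝ 1 u) (hu_pos : ∀ x ∈ [[-π, π]], 0 < u x) :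
      ∀ x ∈ [[-π, π]], HasDerivAt (fun x ↦ Real.log (u x)) ((deriv u / u) x) x :=
    fun x hx ↦ (hu.differentiable one_ne_zero x).hasDerivAt.log (hu_pos x hx).ne'
  have logDeriv_lim : TendstoUniformlyOn ((fun i ↦ deriv (fn i)) / fn) (deriv f / f) l [[-π, π]] :=
    tendstoUniformlyOn_div_of_isCompact isCompact_uIcc
      (hf_smooth.continuous_deriv le_rfl).continuousOn hf_smooth.continuous.continuousOn
      (fun x hx ↦ (hf_pos x hx).ne') hunif' hunif
  exact hc.tendsto_of_tendsto_integral_deriv_sub_sq hchat (log_hasDerivAt hf_smooth hf_pos)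
    (memLp_restrict_Ioc_of_continuousOn (logDeriv_cont hf_smooth hf_pos) 2)
    (hfn_pos.mono fun i hi ↦ log_hasDerivAt (hfn_smooth i) hi)
    (hfn_pos.mono fun i hi ↦
      memLp_restrict_Ioc_of_continuousOn (logDeriv_cont (hfn_smooth i) hi) 2)
    (tendsto_integral_sub_sq_of_tendstoUniformlyOn (logDeriv_cont hf_smooth hf_pos)
      (hfn_pos.mono fun i hi ↦ logDeriv_cont (hfn_smooth i) hi) logDeriv_lim)

end Convergence

/-- If `f` is 2π-periodic, even, `C¹` with `0 < m ≤ f ≤ M`, the `f_n` are 2π-periodic, even,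
`C¹` with `0 < C₁ ≤ f_n ≤ C₂`, both `f_n → f` and `f_n' → f'` uniformly on `[-π, π]`, and
`(c_k)`, `(ĉ_{k,n})` are obtained by the MA recursion from the Fourier coefficients of
`log f` and `log f_n`, then `∑_{k=0}^∞ k² (ĉ_{k,n} - c_k)² → 0` and
`∑_{k=0}^∞ |ĉ_{k,n} - c_k| → 0`. -/
theorem statement10 (f : ℝ → ℝ) (fn : ℕ → ℝ → ℝ) (m M C₁ C₂ : ℝ)
    (hm : 0 < m) (hbound : ∀ x, m ≤ f x ∧ f x ≤ M)
    (hC₁ : 0 < C₁) (hC₁₂ : C₁ < C₂)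
    (hnbound : ∀ n x, C₁ ≤ fn n x ∧ fn n x ≤ C₂)
    (hf_per : Function.Periodic f (2 * Real.pi))
    (hfn_per : ∀ n, Function.Periodic (fn n) (2 * Real.pi))
    (hf_even : ∀ x, f (-x) = f x) (hfn_even : ∀ n x, fn n (-x) = fn n x)
    (hf_smooth : ContDiff ℝ 1 f) (hfn_smooth : ∀ n, ContDiff ℝ 1 (fn n))
    (hunif : TendstoUniformlyOn fn f atTop (Set.Icc (-Real.pi) Real.pi))
    (hunif' : TendstoUniformlyOn (fun n => deriv (fn n)) (deriv f) atTop
      (Set.Icc (-Real.pi) Real.pi))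
    (c : ℕ → ℝ) (chat : ℕ → ℕ → ℝ)
    (hc : IsMARecR (fun k => cosFourierCoef (fun x => Real.log (f x)) k) c)
    (hchat : ∀ n, IsMARecR (fun k => cosFourierCoef (fun x => Real.log (fn n x)) k) (chat n)) :
    Tendsto (fun n => ∑' k : ℕ, ENNReal.ofReal ((k : ℝ) ^ 2 * (chat n k - c k) ^ 2))
      atTop (𝓝 0) ∧
    Tendsto (fun n => ∑' k : ℕ, ENNReal.ofReal |chat n k - c k|) atTop (𝓝 0) := by
  exact statement10_general (fun x _ ↦ hm.trans_le (hbound x).1) hf_smooth hfn_smooth hunif hunif'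
    hc hchat
end
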